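/- arXiv:1908.03847 — 3 statements merged into one kernel-verified Lean document; each statement's English description precedes it below -/
import Mathlib

section
/- Let i ≤ k be positive integers, let A : 𝓢(ℝ^i) → 𝓢'(ℝ^i) be a continuous linear map, and let ℓ : {1,…,i} → {1,…,k} be injective. Then there exists a unique continuous linear map E : 𝓢(ℝ^k) → 𝓢'(ℝ^k) such that for all f₁,…,f_k, g₁,…,g_k ∈ 𝓢(ℝ): E(f₁⊗⋯⊗f_k)(g₁⊗⋯⊗g_k) = A(f_{ℓ(1)}⊗⋯⊗f_{ℓ(i)})(g_{ℓ(1)}⊗⋯⊗g_{ℓ(i)}) · ∏_{m ∉ range(ℓ)} ∫_ℝ f_m(x) g_m(x) dx. (E is the k-particle extension A_{(ℓ(1),…,ℓ(i))}, i.e. the i-particle observable A acting only in the variables with indices ℓ(1),…,ℓ(i).) -/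
/-!
Existence. Split a point of `ℝ^k` as `(x, y)`, where `x` collects the coordinates `ℓ(1), …, ℓ(i)`
and `y` the remaining ones, and put `E F G = ∫ A (F(·, y)) (G(·, y)) dy`. A continuous linear map
`𝓢 → 𝓢'` is jointly (sequentially, hence, `𝓢` being metrizable, truly) continuous as a bilinear
form, so `|A f g|` is bounded by a product of continuous seminorms of `f` and `g`
(`exists_bilinear_bound`). The seminorms of the slice `F(·, y)` decay faster than any power of `‖y‖`
(`exists_sup_seminorm_slice_le`), so the integral converges and obeys a bound of the same kind,
which makes `E` continuous (`exists_clm_of_bound`). On pure tensors the slices are multiples of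
`⊗ f_{ℓ(a)}` and the integral factorizes by Fubini (`exists_isExtension`).

Uniqueness. An extension is determined on pairs of pure tensors, so it suffices that pure tensors
span a dense subspace of `𝓢(ℝ^k)` (`dense_span_compactTensors`). Compactly supported functions are
dense (`mem_closure_hasCompactSupport`), and by dilation it is enough to treat `F` supported in
`[-1/4, 1/4]^k`. Such an `F` is the sum of its Fourier series on the unit cube; multiplying the
series by a tensor bump equal to `1` on `[-1/4, 1/4]^k` turns its terms into compactly supported
pure tensors without changing the sum. The coefficients are values of the Fourier transform of `F`
at lattice points, hence decay rapidly, while the seminorms of the cut off plane waves grow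
polynomially, so the series converges in `𝓢(ℝ^k)` (`mem_closure_of_small_support`).
-/

open MeasureTheory SchwartzMap

/-- Distribution-valued operators on `ℝ^n`: continuous linear maps `𝓢(ℝ^n) → 𝓢'(ℝ^n)`. -/
abbrev DVO (n : ℕ) : Type :=
  SchwartzMap (Fin n → ℝ) ℂ →L[ℂ] (SchwartzMap (Fin n → ℝ) ℂ →L[ℂ] ℂ)

/-- `F ∈ 𝓢(ℝ^n)` is the pure tensor `f₁ ⊗ ⋯ ⊗ f_n` of the one-dimensional Schwartz functions
`f₁, …, f_n`. -/
def IsTensor {n : ℕ} (f : Fin n → SchwartzMap ℝ ℂ) (F : SchwartzMap (Fin n → ℝ) ℂ) : Prop :=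
  ∀ x : Fin n → ℝ, F x = ∏ m, f m (x m)

/-- `E` is the `k`-particle extension `A_{(ℓ(1),…,ℓ(i))}` of the `i`-particle operator `A`, acting
only in the variables `ℓ(1), …, ℓ(i)`: on pure tensors,
`E(f₁⊗⋯⊗f_k)(g₁⊗⋯⊗g_k) = A(f_{ℓ(1)}⊗⋯⊗f_{ℓ(i)})(g_{ℓ(1)}⊗⋯⊗g_{ℓ(i)}) ·
∏_{m ∉ range ℓ} ∫ f_m g_m`. -/
def IsExtension (i k : ℕ) (A : DVO i) (ℓ : Fin i → Fin k) (E : DVO k) : Prop :=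
  ∀ (f g : Fin k → SchwartzMap ℝ ℂ)
    (F G : SchwartzMap (Fin k → ℝ) ℂ) (F' G' : SchwartzMap (Fin i → ℝ) ℂ),
    IsTensor f F → IsTensor g G →
    IsTensor (fun a => f (ℓ a)) F' → IsTensor (fun a => g (ℓ a)) G' →
    E F G = A F' G' * ∏ m ∈ Finset.univ \ Finset.image ℓ Finset.univ, ∫ x : ℝ, f m x * g m x

open Filter Topology
open scoped ContDiff

/-! ### Bilinear forms on Schwartz space -/

section
variable {D : Type*} [NormedAddCommGroup D] [NormedSpace ℝ D]

/-- A continuous linear map `𝓢 → 𝓢'` is jointly continuous as a bilinear form: along a convergent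
sequence `(fₙ, gₙ)` the functionals `A fₙ` converge uniformly on the bounded set `{gₙ}`, and
sequential continuity suffices in the metrizable space `𝓢 × 𝓢`. -/
theorem continuous_uncurry_clm
    (A : 𝓢(D, ℂ) →L[ℂ] (𝓢(D, ℂ) →L[ℂ] ℂ)) :
    Continuous (fun p : 𝓢(D, ℂ) × 𝓢(D, ℂ) => A p.1 p.2) := by
  refine continuous_iff_seqContinuous.2 fun u p hu => ?_
  have h1 : Tendsto (fun n => (u n).1) atTop (𝓝 p.1) := (continuous_fst.tendsto p).comp hu
  have h2 : Tendsto (fun n => (u n).2) atTop (𝓝 p.2) := (continuous_snd.tendsto p).comp hu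
  have hA : Tendsto (fun n => A (u n).1) atTop (𝓝 (A p.1)) := (A.continuous.tendsto _).comp h1
  have hb : Bornology.IsVonNBounded ℂ (Set.range fun n => (u n).2) := by
    exact h2.isVonNBounded_range ℂ
  have hU := (UniformConvergenceCLM.tendsto_iff_tendstoUniformlyOn (RingHom.id ℂ) ℂ
    {S : Set 𝓢(D, ℂ) | Bornology.IsVonNBounded ℂ S}).1 hA _ hb
  have h3 : Tendsto (fun n => A p.1 (u n).2) atTop (𝓝 (A p.1 p.2)) :=
    ((A p.1).continuous.tendsto _).comp h2
  rw [Metric.tendsto_atTop] at h3 ⊢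
  rw [Metric.tendstoUniformlyOn_iff] at hU
  intro ε hε
  obtain ⟨N, hN⟩ := h3 (ε / 2) (by positivity)
  obtain ⟨M, hM⟩ := eventually_atTop.1 (hU (ε / 2) (by positivity))
  refine ⟨max N M, fun n hn => ?_⟩
  have e1 := hN n (le_trans (le_max_left _ _) hn)
  have e2 : dist (A p.1 (u n).2) (A (u n).1 (u n).2) < ε / 2 :=
    hM n (le_trans (le_max_right _ _) hn) _ ⟨n, rfl⟩
  have e3 := dist_triangle (A (u n).1 (u n).2) (A p.1 (u n).2) (A p.1 p.2)
  rw [dist_comm] at e2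
  change dist (A (u n).1 (u n).2) (A p.1 p.2) < ε
  linarith

theorem exists_bilinear_bound
    (A : 𝓢(D, ℂ) →L[ℂ] (𝓢(D, ℂ) →L[ℂ] ℂ)) :
    ∃ (s : Finset (ℕ × ℕ)) (C : ℝ), 0 ≤ C ∧ ∀ f g : 𝓢(D, ℂ),
      ‖A f g‖ ≤ C * s.sup (schwartzSeminormFamily ℂ D ℂ) f
        * s.sup (schwartzSeminormFamily ℂ D ℂ) g := by
  have hc := (continuous_uncurry_clm A).tendsto 0
  have hmem : {p : 𝓢(D, ℂ) × 𝓢(D, ℂ) | ‖A p.1 p.2‖ < 1} ∈ 𝓝 (0 : 𝓢(D, ℂ) × 𝓢(D, ℂ)) := by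
    have := hc (Metric.ball_mem_nhds _ one_pos)
    simpa [Metric.ball, Set.preimage] using this
  rw [show (0 : 𝓢(D, ℂ) × 𝓢(D, ℂ)) = (0, 0) from rfl, mem_nhds_prod_iff] at hmem
  obtain ⟨U, hU, V, hV, hUV⟩ := hmem
  obtain ⟨s, r, hr, hs⟩ := ((schwartz_withSeminorms ℂ D ℂ).mem_nhds_iff _ _).1 hU
  obtain ⟨t, q, hq, ht⟩ := ((schwartz_withSeminorms ℂ D ℂ).mem_nhds_iff _ _).1 hV
  classical
  set P := (s ∪ t).sup (schwartzSeminormFamily ℂ D ℂ) with hP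
  have hsP : s.sup (schwartzSeminormFamily ℂ D ℂ) ≤ P := Finset.sup_mono Finset.subset_union_left
  have htP : t.sup (schwartzSeminormFamily ℂ D ℂ) ≤ P := Finset.sup_mono Finset.subset_union_right
  have key : ∀ f g, P f < r → P g < q → ‖A f g‖ < 1 := by
    intro f g hf hg
    refine @hUV (f, g) ⟨hs ?_, ht ?_⟩
    · rw [Seminorm.mem_ball_zero]; exact (hsP f).trans_lt hf
    · rw [Seminorm.mem_ball_zero]; exact (htP g).trans_lt hg
  refine ⟨s ∪ t, r⁻¹ * q⁻¹, by positivity, fun f g => ?_⟩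
  -- rescale `f`, `g` into the balls of radii `r`, `q`; the slack `ε` covers vanishing seminorms
  have hε : ∀ ε : ℝ, 0 < ε → ‖A f g‖ ≤ r⁻¹ * q⁻¹ * (P f + ε) * (P g + ε) := by
    intro ε hε
    have hPf : 0 < P f + ε := add_pos_of_nonneg_of_pos (apply_nonneg _ _) hε
    have hPg : 0 < P g + ε := add_pos_of_nonneg_of_pos (apply_nonneg _ _) hε
    have h := key (((r / (P f + ε) : ℝ) : ℂ) • f) (((q / (P g + ε) : ℝ) : ℂ) • g) ?_ ?_
    · rw [map_smul, map_smul, smul_apply, norm_smul, norm_smul, Complex.norm_real,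
        Complex.norm_real, Real.norm_of_nonneg (by positivity),
        Real.norm_of_nonneg (by positivity)] at h
      have : q / (P g + ε) * (r / (P f + ε) * ‖A f g‖)
        = ‖A f g‖ / (r⁻¹ * q⁻¹ * (P f + ε) * (P g + ε)) := by field_simp
      rw [this, div_lt_one (by positivity)] at h
      exact h.le
    · rw [map_smul_eq_mul, Complex.norm_real, Real.norm_of_nonneg (by positivity),
        div_mul_eq_mul_div, div_lt_iff₀ hPf]
      exact mul_lt_mul_of_pos_left (by linarith) hr
    · rw [map_smul_eq_mul, Complex.norm_real, Real.norm_of_nonneg (by positivity),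
        div_mul_eq_mul_div, div_lt_iff₀ hPg]
      exact mul_lt_mul_of_pos_left (by linarith) hq
  have hlim : Tendsto (fun ε : ℝ => r⁻¹ * q⁻¹ * (P f + ε) * (P g + ε)) (𝓝[>] 0)
      (𝓝 (r⁻¹ * q⁻¹ * (P f + 0) * (P g + 0))) :=
    (Continuous.tendsto (by fun_prop) 0).mono_left nhdsWithin_le_nhds
  rw [add_zero, add_zero] at hlim
  exact ge_of_tendsto hlim (eventually_mem_nhdsWithin.mono fun ε h => hε ε h)

/-- Converse of `exists_bilinear_bound`: a bilinear form bounded by a product of seminorms comes from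
a continuous linear map into the strong dual. -/
theorem exists_clm_of_bound (B : 𝓢(D, ℂ) → 𝓢(D, ℂ) → ℂ)
    (hadd₁ : ∀ f f' g, B (f + f') g = B f g + B f' g)
    (hsmul₁ : ∀ (c : ℂ) f g, B (c • f) g = c * B f g)
    (hadd₂ : ∀ f g g', B f (g + g') = B f g + B f g')
    (hsmul₂ : ∀ (c : ℂ) f g, B f (c • g) = c * B f g)
    (hB : ∃ (s : Finset (ℕ × ℕ)) (C : ℝ), 0 ≤ C ∧ ∀ f g : 𝓢(D, ℂ),
      ‖B f g‖ ≤ C * s.sup (schwartzSeminormFamily ℂ D ℂ) f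
        * s.sup (schwartzSeminormFamily ℂ D ℂ) g) :
    ∃ E : 𝓢(D, ℂ) →L[ℂ] (𝓢(D, ℂ) →L[ℂ] ℂ), ∀ f g, E f g = B f g := by
  obtain ⟨s, C, hC, hB⟩ := hB
  set P := s.sup (schwartzSeminormFamily ℂ D ℂ) with hP
  have hPc : Continuous P := by
    refine Seminorm.continuous_of_le (p := P) ?_ (le_refl _)
    exact Seminorm.continuous' (r := 1)
      ((schwartz_withSeminorms ℂ D ℂ).mem_nhds_iff _ _ |>.2
        ⟨s, 1, one_pos, Seminorm.ball_subset_closedBall _ _ _⟩)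
  let E₁ : 𝓢(D, ℂ) → (𝓢(D, ℂ) →L[ℂ] ℂ) := fun f =>
    mkCLMtoNormedSpace (𝕜 := ℂ) (𝕜' := ℂ) (σ := RingHom.id ℂ) (B f) (hadd₂ f)
      (fun c g => by simpa using hsmul₂ c f g)
      ⟨s, C * P f, mul_nonneg hC (apply_nonneg _ _), hB f⟩
  have hE₁ : ∀ f g, E₁ f g = B f g := fun f g => rfl
  let E₂ : 𝓢(D, ℂ) →ₗ[ℂ] (𝓢(D, ℂ) →L[ℂ] ℂ) :=
    { toFun := E₁
      map_add' := fun f f' => by ext g; simp [hE₁, hadd₁]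
      map_smul' := fun c f => by ext g; simp [hE₁, hsmul₁] }
  have hcont : Continuous E₂ := by
    refine continuous_of_continuousAt_zero E₂ ?_
    rw [ContinuousAt, map_zero]
    refine (UniformConvergenceCLM.tendsto_iff_tendstoUniformlyOn (RingHom.id ℂ) ℂ
      {S : Set 𝓢(D, ℂ) | Bornology.IsVonNBounded ℂ S}).2 fun S hS => ?_
    obtain ⟨R, hR, hRS⟩ :=
      ((schwartz_withSeminorms ℂ D ℂ).isVonNBounded_iff_finset_seminorm_bounded).1 hS s
    rw [Metric.tendstoUniformlyOn_iff]
    intro ε hε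
    have h0 : Tendsto (fun f => C * P f * R) (𝓝 0) (𝓝 (C * P 0 * R)) :=
      Continuous.tendsto (by fun_prop) 0
    rw [map_zero, mul_zero, zero_mul] at h0
    filter_upwards [h0.eventually (gt_mem_nhds hε)] with f hf g hg
    have h1 : dist ((0 : 𝓢(D, ℂ) →L[ℂ] ℂ) g) (E₂ f g) = ‖B f g‖ := by
      rw [zero_apply, dist_zero_left]; rfl
    refine lt_of_le_of_lt (le_of_eq_of_le h1 ((hB f g).trans ?_)) hf
    exact mul_le_mul_of_nonneg_left (hRS g hg).le (mul_nonneg hC (apply_nonneg _ _))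
  exact ⟨⟨E₂, hcont⟩, hE₁⟩
end

/-! ### Slices and existence -/

section
variable {X Y Z : Type*} [NormedAddCommGroup X] [NormedSpace ℝ X]
  [NormedAddCommGroup Y] [NormedSpace ℝ Y] [NormedAddCommGroup Z] [NormedSpace ℝ Z]

/-- The slice `x ↦ F (I x + J y)` of a Schwartz function `F` on `Z`, where `I : X → Z`, `J : Y → Z`
are linear and `I x + J y` dominates `x`. -/
noncomputable def slice (I : X →L[ℝ] Z) (J : Y →L[ℝ] Z) (hX : ∀ x y, ‖x‖ ≤ ‖I x + J y‖) (y : Y) :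
    𝓢(Z, ℂ) →L[ℂ] 𝓢(X, ℂ) :=
  compCLM ℂ (g := fun x => I x + J y) (by fun_prop)
    ⟨1, 1, fun x => by have := hX x y; rw [one_mul, pow_one]; linarith⟩

variable {I : X →L[ℝ] Z} {J : Y →L[ℝ] Z} (hX : ∀ x y, ‖x‖ ≤ ‖I x + J y‖)

theorem slice_apply (y : Y) (F : 𝓢(Z, ℂ)) (x : X) : slice I J hX y F x = F (I x + J y) := rfl

theorem iteratedFDeriv_slice (y : Y) (F : 𝓢(Z, ℂ)) (n : ℕ) (x : X) :
    iteratedFDeriv ℝ n (slice I J hX y F) x =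
      (iteratedFDeriv ℝ n F (I x + J y)).compContinuousLinearMap fun _ => I := by
  have h : (slice I J hX y F : X → ℂ) = (fun z => F (z + J y)) ∘ I := rfl
  have hs : ContDiff ℝ n (fun z => F (z + J y)) :=
    (F.smooth n).comp (contDiff_id.add contDiff_const)
  rw [h, I.iteratedFDeriv_comp_right hs x le_rfl, iteratedFDeriv_comp_add_right]

theorem norm_comp_le_of_norm_le_one (hI : ‖I‖ ≤ 1) {n : ℕ} (T : Z [×n]→L[ℝ] ℂ) :
    ‖T.compContinuousLinearMap fun _ => I‖ ≤ ‖T‖ := by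
  refine (T.norm_compContinuousLinearMap_le _).trans ?_
  refine mul_le_of_le_one_right (norm_nonneg _) ?_
  exact Finset.prod_le_one (fun _ _ => norm_nonneg _) fun _ _ => hI

theorem seminorm_slice_le (hI : ‖I‖ ≤ 1) (hY : ∀ x y, ‖y‖ ≤ ‖I x + J y‖)
    (F : 𝓢(Z, ℂ)) (a b N : ℕ) (y : Y) :
    ‖y‖ ^ N * SchwartzMap.seminorm ℂ a b (slice I J hX y F) ≤
      SchwartzMap.seminorm ℂ (a + N) b F := by
  rcases eq_or_ne (‖y‖ ^ N) 0 with h0 | h0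
  · rw [h0, zero_mul]; exact apply_nonneg _ _
  have hpos : 0 < ‖y‖ ^ N := lt_of_le_of_ne (by positivity) h0.symm
  rw [← le_div_iff₀' hpos]
  refine seminorm_le_bound ℂ a b _ (div_nonneg (apply_nonneg _ _) hpos.le) fun x => ?_
  rw [le_div_iff₀' hpos, iteratedFDeriv_slice]
  refine le_trans ?_ (F.le_seminorm ℂ (a + N) b (I x + J y))
  calc ‖y‖ ^ N * (‖x‖ ^ a * ‖(iteratedFDeriv ℝ b F (I x + J y)).compContinuousLinearMap
          fun _ => I‖)
      ≤ ‖I x + J y‖ ^ N * (‖I x + J y‖ ^ a * ‖iteratedFDeriv ℝ b F (I x + J y)‖) := by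
        gcongr
        · exact hY x y
        · exact hX x y
        · exact norm_comp_le_of_norm_le_one hI _
    _ = _ := by ring

/-- Slices are Lipschitz in `y` for each seminorm, by the mean value inequality. -/
theorem seminorm_slice_sub_le (hI : ‖I‖ ≤ 1) (hJ : ‖J‖ ≤ 1) (F : 𝓢(Z, ℂ)) (a b : ℕ) (y y' : Y) :
    SchwartzMap.seminorm ℂ a b (slice I J hX y F - slice I J hX y' F) ≤
      SchwartzMap.seminorm ℂ a (b + 1) F * ‖y - y'‖ := by
  refine seminorm_le_bound ℂ a b _ (mul_nonneg (apply_nonneg _ _) (norm_nonneg _)) fun x => ?_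
  have hsub : iteratedFDeriv ℝ b (slice I J hX y F - slice I J hX y' F : 𝓢(X, ℂ)) x =
      (iteratedFDeriv ℝ b F (I x + J y) - iteratedFDeriv ℝ b F (I x + J y')
        ).compContinuousLinearMap fun _ => I := by
    have : ((slice I J hX y F - slice I J hX y' F : 𝓢(X, ℂ)) : X → ℂ)
        = (slice I J hX y F : X → ℂ) - (slice I J hX y' F : X → ℂ) := by ext; simp
    rw [this, iteratedFDeriv_sub_apply (SchwartzMap.contDiffAt _ b) (SchwartzMap.contDiffAt _ b),
      iteratedFDeriv_slice, iteratedFDeriv_slice]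
    rfl
  rw [hsub]
  refine (mul_le_mul_of_nonneg_left (norm_comp_le_of_norm_le_one hI _) (by positivity)).trans ?_
  rcases eq_or_ne (‖x‖ ^ a) 0 with h0 | h0
  · rw [h0, zero_mul]; exact mul_nonneg (apply_nonneg _ _) (norm_nonneg _)
  have hpos : 0 < ‖x‖ ^ a := lt_of_le_of_ne (by positivity) h0.symm
  have hd : Differentiable ℝ (iteratedFDeriv ℝ b F) :=
    (F.smooth (b + 1)).differentiable_iteratedFDeriv (by exact_mod_cast Nat.lt_succ_self b)
  have hder : ∀ w : Y, HasFDerivAt (fun w => iteratedFDeriv ℝ b F (I x + J w))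
      ((fderiv ℝ (iteratedFDeriv ℝ b F) (I x + J w)).comp J) w := by
    intro w
    have h1 : HasFDerivAt (fun w => I x + J w) J w := J.hasFDerivAt.const_add _
    exact ((hd _).hasFDerivAt).comp w h1
  have hbd : ∀ w : Y, ‖(fderiv ℝ (iteratedFDeriv ℝ b F) (I x + J w)).comp J‖ ≤
      SchwartzMap.seminorm ℂ a (b + 1) F / ‖x‖ ^ a := by
    intro w
    rw [le_div_iff₀' hpos]
    refine le_trans ?_ (F.le_seminorm ℂ a (b + 1) (I x + J w))
    have h2 : ‖(fderiv ℝ (iteratedFDeriv ℝ b F) (I x + J w)).comp J‖ ≤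
        ‖iteratedFDeriv ℝ (b + 1) F (I x + J w)‖ := by
      rw [← norm_fderiv_iteratedFDeriv]
      exact (ContinuousLinearMap.opNorm_comp_le _ _).trans
        (mul_le_of_le_one_right (norm_nonneg _) hJ)
    refine (mul_le_mul_of_nonneg_left h2 hpos.le).trans ?_
    gcongr
    exact hX x w
  have h := Convex.norm_image_sub_le_of_norm_hasFDerivWithin_le (𝕜 := ℝ)
    (fun w _ => (hder w).hasFDerivWithinAt) (fun w _ => hbd w) convex_univ
    (Set.mem_univ y') (Set.mem_univ y)
  rwa [div_mul_eq_mul_div, le_div_iff₀' hpos] at h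

theorem continuous_slice (hI : ‖I‖ ≤ 1) (hJ : ‖J‖ ≤ 1) (F : 𝓢(Z, ℂ)) :
    Continuous (fun y => slice I J hX y F) := by
  rw [continuous_iff_continuousAt]
  intro y₀
  rw [ContinuousAt, (schwartz_withSeminorms ℂ X ℂ).tendsto_nhds]
  rintro ⟨a, b⟩ ε hε
  have h : Tendsto (fun y => SchwartzMap.seminorm ℂ a (b + 1) F * ‖y - y₀‖) (𝓝 y₀)
      (𝓝 (SchwartzMap.seminorm ℂ a (b + 1) F * ‖y₀ - y₀‖)) :=
    Continuous.tendsto (by fun_prop) y₀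
  rw [sub_self, norm_zero, mul_zero] at h
  filter_upwards [h.eventually (gt_mem_nhds hε)] with y hy
  exact (seminorm_slice_sub_le hX hI hJ F a b y y₀).trans_lt hy

/-- The decay of slices in the form needed to integrate over `y`: a finite supremum of
seminorms of the slice is `O((1 + ‖y‖) ^ (-N))`, controlled by finitely many seminorms of `F`. -/
theorem exists_sup_seminorm_slice_le (hI : ‖I‖ ≤ 1) (hY : ∀ x y, ‖y‖ ≤ ‖I x + J y‖)
    (s : Finset (ℕ × ℕ)) (N : ℕ) :
    ∃ t : Finset (ℕ × ℕ), ∀ (F : 𝓢(Z, ℂ)) (y : Y),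
      (1 + ‖y‖) ^ N * s.sup (schwartzSeminormFamily ℂ X ℂ) (slice I J hX y F) ≤
        2 ^ N * t.sup (schwartzSeminormFamily ℂ Z ℂ) F := by
  classical
  refine ⟨s ∪ s.image fun p => (p.1 + N, p.2), fun F y => ?_⟩
  set t := s ∪ s.image fun p => (p.1 + N, p.2) with ht
  have hpos : 0 < (1 + ‖y‖) ^ N := by positivity
  rw [← le_div_iff₀' hpos]
  refine Seminorm.finset_sup_apply_le (div_nonneg (mul_nonneg (by positivity)
    (apply_nonneg _ _)) hpos.le) fun p hp => ?_
  rw [le_div_iff₀' hpos]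
  have h0 := seminorm_slice_le hX hI hY F p.1 p.2 0 y
  have hN := seminorm_slice_le hX hI hY F p.1 p.2 N y
  rw [pow_zero, one_mul, add_zero] at h0
  have h0' : SchwartzMap.seminorm ℂ p.1 p.2 F ≤ t.sup (schwartzSeminormFamily ℂ Z ℂ) F :=
    Seminorm.le_finset_sup_apply (p := schwartzSeminormFamily ℂ Z ℂ)
      (Finset.mem_union_left _ hp)
  have hN' : SchwartzMap.seminorm ℂ (p.1 + N) p.2 F ≤ t.sup (schwartzSeminormFamily ℂ Z ℂ) F :=
    Seminorm.le_finset_sup_apply (p := schwartzSeminormFamily ℂ Z ℂ)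
      (i := (p.1 + N, p.2)) (Finset.mem_union_right _ (Finset.mem_image_of_mem _ hp))
  have hnn : 0 ≤ SchwartzMap.seminorm ℂ p.1 p.2 (slice I J hX y F) := apply_nonneg _ _
  change (1 + ‖y‖) ^ N * SchwartzMap.seminorm ℂ p.1 p.2 (slice I J hX y F) ≤ _
  rcases le_total ‖y‖ 1 with hy | hy
  · refine mul_le_mul (pow_le_pow_left₀ (by positivity) (by linarith) _) (h0.trans h0') hnn
      (by positivity)
  · calc (1 + ‖y‖) ^ N * SchwartzMap.seminorm ℂ p.1 p.2 (slice I J hX y F)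
        ≤ (2 * ‖y‖) ^ N * SchwartzMap.seminorm ℂ p.1 p.2 (slice I J hX y F) := by
          gcongr; linarith
      _ = 2 ^ N * (‖y‖ ^ N * SchwartzMap.seminorm ℂ p.1 p.2 (slice I J hX y F)) := by
          rw [mul_pow]; ring
      _ ≤ _ := by gcongr; exact hN.trans hN'

variable [FiniteDimensional ℝ Y] [MeasurableSpace Y] [BorelSpace Y]
  (μ : Measure Y) [μ.IsAddHaarMeasure]

/-- The operator `F ↦ (G ↦ ∫ A(F_y)(G_y) dy)` built from slices is well defined and continuous. -/
theorem exists_integral_slice (hI : ‖I‖ ≤ 1) (hJ : ‖J‖ ≤ 1) (hY : ∀ x y, ‖y‖ ≤ ‖I x + J y‖)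
    (A : 𝓢(X, ℂ) →L[ℂ] (𝓢(X, ℂ) →L[ℂ] ℂ)) :
    ∃ E : 𝓢(Z, ℂ) →L[ℂ] (𝓢(Z, ℂ) →L[ℂ] ℂ), ∀ F G,
      E F G = ∫ y, A (slice I J hX y F) (slice I J hX y G) ∂μ := by
  classical
  obtain ⟨s, C, hC, hA⟩ := exists_bilinear_bound A
  set N := Module.finrank ℝ Y + 1 with hN
  obtain ⟨t, ht⟩ := exists_sup_seminorm_slice_le hX hI hY s N
  set P := t.sup (schwartzSeminormFamily ℂ Z ℂ) with hP
  have hbound : ∀ F G y, ‖A (slice I J hX y F) (slice I J hX y G)‖ ≤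
      C * (2 ^ N * P F) * (2 ^ N * P G) * (1 + ‖y‖) ^ (-(N : ℝ)) := by
    intro F G y
    set Q := s.sup (schwartzSeminormFamily ℂ X ℂ)
    have hpos : 0 < (1 + ‖y‖) ^ N := by positivity
    have h1 : Q (slice I J hX y F) ≤ 2 ^ N * P F * (1 + ‖y‖) ^ (-(N : ℝ)) := by
      rw [Real.rpow_neg (by positivity), Real.rpow_natCast, ← div_eq_mul_inv, le_div_iff₀' hpos]
      exact ht F y
    have h2 : Q (slice I J hX y G) ≤ 2 ^ N * P G := by
      refine le_trans ?_ (ht G y)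
      exact le_mul_of_one_le_left (apply_nonneg _ _)
        (one_le_pow₀ (by linarith [norm_nonneg y]))
    calc _ ≤ C * Q (slice I J hX y F) * Q (slice I J hX y G) := hA _ _
      _ ≤ C * (2 ^ N * P F * (1 + ‖y‖) ^ (-(N : ℝ))) * (2 ^ N * P G) := by
        have hF0 : 0 ≤ P F := apply_nonneg _ _
        have hG0 : 0 ≤ Q (slice I J hX y G) := apply_nonneg _ _
        gcongr
      _ = _ := by ring
  have hdec : Integrable (fun y : Y => (1 + ‖y‖) ^ (-(N : ℝ))) μ :=
    integrable_one_add_norm (by rw [hN]; push_cast; linarith)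
  have hint : ∀ F G, Integrable (fun y => A (slice I J hX y F) (slice I J hX y G)) μ := by
    intro F G
    refine (hdec.const_mul (C * (2 ^ N * P F) * (2 ^ N * P G))).mono' ?_
      (Eventually.of_forall (hbound F G))
    have : Continuous fun y => A (slice I J hX y F) (slice I J hX y G) :=
      (continuous_uncurry_clm A).comp
        ((continuous_slice hX hI hJ F).prodMk (continuous_slice hX hI hJ G))
    exact this.aestronglyMeasurable
  refine exists_clm_of_bound _ ?_ ?_ ?_ ?_ ?_
  · intro f f' g
    rw [← integral_add (hint _ _) (hint _ _)]
    simp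
  · intro c f g
    rw [← integral_const_mul]
    simp
  · intro f g g'
    rw [← integral_add (hint _ _) (hint _ _)]
    simp
  · intro c f g
    rw [← integral_const_mul]
    simp
  · set K := ∫ y, (1 + ‖y‖) ^ (-(N : ℝ)) ∂μ
    have hK : 0 ≤ K := integral_nonneg fun y => by positivity
    refine ⟨t, C * 2 ^ N * 2 ^ N * K, by positivity, fun F G => ?_⟩
    refine (norm_integral_le_of_norm_le (hdec.const_mul (C * (2 ^ N * P F) * (2 ^ N * P G)))
      (Eventually.of_forall (hbound F G))).trans (le_of_eq ?_)
    rw [integral_const_mul]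
    ring
end

/-- The integral over the remaining variables of `A` applied to slices is an extension of `A`. -/
theorem exists_isExtension (i k : ℕ) (A : DVO i) (ℓ : Fin i → Fin k)
    (hℓ : Function.Injective ℓ) : ∃ E : DVO k, IsExtension i k A ℓ E := by
  classical
  set s : Finset (Fin k) := Finset.univ \ Finset.image ℓ Finset.univ with hs
  have hmem : ∀ m, m ∈ s ↔ ¬ ∃ a, ℓ a = m := by intro m; simp [hs]
  let I : (Fin i → ℝ) →L[ℝ] (Fin k → ℝ) := ContinuousLinearMap.pi fun m =>
    if h : ∃ a, ℓ a = m then ContinuousLinearMap.proj h.choose else 0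
  let J : (s → ℝ) →L[ℝ] (Fin k → ℝ) := ContinuousLinearMap.pi fun m =>
    if h : m ∈ s then ContinuousLinearMap.proj (⟨m, h⟩ : s) else 0
  have hI₁ : ∀ x a, I x (ℓ a) = x a := by
    intro x a
    have h : ∃ a', ℓ a' = ℓ a := ⟨a, rfl⟩
    have h' : h.choose = a := hℓ h.choose_spec
    simp only [I, ContinuousLinearMap.pi_apply, dif_pos h, ContinuousLinearMap.proj_apply, h']
  have hI₂ : ∀ x (m : s), I x m = 0 := by
    intro x m
    simp only [I, ContinuousLinearMap.pi_apply, dif_neg ((hmem _).1 m.2), zero_apply]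
  have hJ₁ : ∀ y (m : s), J y m = y m := by
    intro y m
    simp only [J, ContinuousLinearMap.pi_apply, dif_pos m.2, ContinuousLinearMap.proj_apply]
  have hJ₂ : ∀ y a, J y (ℓ a) = 0 := by
    intro y a
    have : ℓ a ∉ s := fun h => (hmem _).1 h ⟨a, rfl⟩
    simp only [J, ContinuousLinearMap.pi_apply, dif_neg this, zero_apply]
  have hcases : ∀ m : Fin k, (∃ a, ℓ a = m) ∨ ∃ m' : s, (m' : Fin k) = m := by
    intro m
    by_cases h : m ∈ s
    · exact Or.inr ⟨⟨m, h⟩, rfl⟩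
    · exact Or.inl (not_not.1 fun h' => h ((hmem m).2 h'))
  have hI : ‖I‖ ≤ 1 := by
    refine I.opNorm_le_bound zero_le_one fun x => ?_
    rw [one_mul, pi_norm_le_iff_of_nonneg (norm_nonneg _)]
    intro m
    rcases hcases m with ⟨a, rfl⟩ | ⟨m, rfl⟩
    · rw [hI₁]; exact norm_le_pi_norm x a
    · rw [hI₂, norm_zero]; exact norm_nonneg _
  have hJ : ‖J‖ ≤ 1 := by
    refine J.opNorm_le_bound zero_le_one fun x => ?_
    rw [one_mul, pi_norm_le_iff_of_nonneg (norm_nonneg _)]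
    intro m
    rcases hcases m with ⟨a, rfl⟩ | ⟨m, rfl⟩
    · rw [hJ₂, norm_zero]; exact norm_nonneg _
    · rw [hJ₁]; exact norm_le_pi_norm x m
  have hX : ∀ x y, ‖x‖ ≤ ‖I x + J y‖ := by
    intro x y
    rw [pi_norm_le_iff_of_nonneg (norm_nonneg _)]
    intro a
    have := norm_le_pi_norm (I x + J y) (ℓ a)
    rwa [Pi.add_apply, hI₁, hJ₂, add_zero] at this
  have hY : ∀ x y, ‖y‖ ≤ ‖I x + J y‖ := by
    intro x y
    rw [pi_norm_le_iff_of_nonneg (norm_nonneg _)]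
    intro m
    have := norm_le_pi_norm (I x + J y) m
    rwa [Pi.add_apply, hI₂, hJ₁, zero_add] at this
  obtain ⟨E, hE⟩ := exists_integral_slice hX volume hI hJ hY A
  refine ⟨E, fun f g F G F' G' hF hG hF' hG' => ?_⟩
  -- a slice of a tensor is a scalar multiple of the tensor in the variables `ℓ a`
  have hslice : ∀ (f : Fin k → 𝓢(ℝ, ℂ)) (F : 𝓢(Fin k → ℝ, ℂ)) (F' : 𝓢(Fin i → ℝ, ℂ)),
      IsTensor f F → IsTensor (fun a => f (ℓ a)) F' → ∀ y,
      slice I J hX y F = (∏ m : s, f m (y m)) • F' := by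
    intro f F F' hF hF' y
    ext x
    rw [slice_apply, hF, smul_apply, hF', smul_eq_mul, mul_comm,
      ← Finset.prod_sdiff (Finset.subset_univ s), ← Finset.prod_coe_sort s]
    have himg : Finset.univ \ s = Finset.image ℓ Finset.univ := by simp [hs]
    rw [himg, Finset.prod_image fun a _ b _ h => hℓ h]
    congr 1
    · refine Finset.prod_congr rfl fun a _ => ?_
      rw [Pi.add_apply, hI₁, hJ₂, add_zero]
    · refine Finset.prod_congr rfl fun m _ => ?_
      rw [Pi.add_apply, hI₂, hJ₁, zero_add]
  rw [hE, ← Finset.prod_coe_sort s,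
    ← integral_fintype_prod_volume_eq_prod (fun (m : s) x => f m x * g m x), ← integral_const_mul]
  congr 1
  ext y
  rw [hslice f F F' hF hF', hslice g G G' hG hG', map_smul, map_smul, smul_apply, smul_eq_mul,
    smul_eq_mul, Finset.prod_mul_distrib]
  ring

/-! ### Pure tensors and convergence of series -/

/-- Pure tensors of compactly supported one-dimensional Schwartz functions. -/
def compactTensors (n : ℕ) : Set 𝓢(Fin n → ℝ, ℂ) :=
  {F | ∃ f : Fin n → 𝓢(ℝ, ℂ), (∀ m, HasCompactSupport (f m)) ∧ IsTensor f F}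

theorem exists_isTensor {n : ℕ} (f : Fin n → 𝓢(ℝ, ℂ)) (hf : ∀ m, HasCompactSupport (f m)) :
    ∃ F : 𝓢(Fin n → ℝ, ℂ), IsTensor f F := by
  have hc : HasCompactSupport fun x : Fin n → ℝ => ∏ m, f m (x m) := by
    refine HasCompactSupport.intro (K := Set.pi Set.univ fun m => tsupport (f m))
      (isCompact_univ_pi fun m => hf m) fun x hx => ?_
    simp only [Set.mem_pi, Set.mem_univ, true_imp_iff, not_forall] at hx
    obtain ⟨m, hm⟩ := hx
    exact Finset.prod_eq_zero (Finset.mem_univ m) (image_eq_zero_of_notMem_tsupport hm)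
  have hs : ContDiff ℝ ∞ fun x : Fin n → ℝ => ∏ m, f m (x m) :=
    contDiff_prod fun m _ => ((f m).smooth ⊤).comp (contDiff_apply ℝ ℝ m)
  exact ⟨hc.toSchwartzMap hs, fun x => rfl⟩

section
variable {D : Type*} [NormedAddCommGroup D] [NormedSpace ℝ D]

/-- A pointwise convergent series of Schwartz functions all of whose seminorms are summable
converges in the Schwartz topology. -/
theorem hasSum_schwartz {α : Type*} {u : α → 𝓢(D, ℂ)} {F : 𝓢(D, ℂ)}
    (hp : ∀ x, HasSum (fun n => u n x) (F x))
    (hu : ∀ a b, Summable fun n => SchwartzMap.seminorm ℂ a b (u n)) : HasSum u F := by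
  rw [HasSum, SummationFilter.unconditional_filter,
    (schwartz_withSeminorms ℂ D ℂ).tendsto_nhds]
  rintro ⟨a, b⟩ ε hε
  have h0 := (tendsto_tsum_compl_atTop_zero fun n => SchwartzMap.seminorm ℂ a b (u n)).eventually
    (gt_mem_nhds hε)
  filter_upwards [h0] with s hs
  refine lt_of_le_of_lt ?_ hs
  have hsub : ∀ a b, Summable fun n : {x // x ∉ s} => SchwartzMap.seminorm ℂ a b (u n) :=
    fun a b => (hu a b).subtype _
  have hfun : ((∑ i ∈ s, u i - F : 𝓢(D, ℂ)) : D → ℂ) =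
      -fun x => ∑' n : {x // x ∉ s}, u n x := by
    ext x
    have := (hp x).summable.sum_add_tsum_subtype_compl s
    rw [(hp x).tsum_eq] at this
    simp only [sub_apply, sum_apply, Pi.neg_apply, ← this]
    ring
  rw [schwartzSeminormFamily_apply]
  refine seminorm_le_bound ℂ a b _ (tsum_nonneg fun _ => apply_nonneg _ _) fun x => ?_
  rw [hfun, iteratedFDeriv_neg_apply, norm_neg,
    iteratedFDeriv_tsum_apply (N := ⊤) (f := fun n : {x // x ∉ s} => u n)
      (v := fun b n => SchwartzMap.seminorm ℂ 0 b (u n))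
      (fun n => (u n).smooth ⊤) (fun b _ => hsub 0 b)
      (fun b n x _ => by simpa using (u n).le_seminorm ℂ 0 b x) le_top]
  have hn : Summable fun n : {x // x ∉ s} => ‖iteratedFDeriv ℝ b (u n) x‖ :=
    (hsub 0 b).of_nonneg_of_le (fun _ => norm_nonneg _)
      fun n => by simpa using (u n).le_seminorm ℂ 0 b x
  calc ‖x‖ ^ a * ‖∑' n : {x // x ∉ s}, iteratedFDeriv ℝ b (u n) x‖
      ≤ ‖x‖ ^ a * ∑' n : {x // x ∉ s}, ‖iteratedFDeriv ℝ b (u n) x‖ := by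
        gcongr; exact norm_tsum_le_tsum_norm hn
    _ = ∑' n : {x // x ∉ s}, ‖x‖ ^ a * ‖iteratedFDeriv ℝ b (u n) x‖ := tsum_mul_left.symm
    _ ≤ _ := (hn.mul_left _).tsum_le_tsum (fun n => (u n).le_seminorm ℂ a b x) (hsub a b)

end

/-! ### Density of compactly supported functions -/

section
variable {D : Type*} [NormedAddCommGroup D] [NormedSpace ℝ D]

/-- The derivatives of `1 - θ(x / R)` are bounded uniformly in `R ≥ 1`, and vanish for `‖x‖ < R`
because `θ = 1` on the unit ball; the factor `‖x‖ / R` records both facts at once. -/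
theorem norm_iteratedFDeriv_cutoff_le (θ : 𝓢(D, ℂ)) (hθ : ∀ x, ‖x‖ < 1 → θ x = 1) {R : ℝ}
    (hR : 1 ≤ R) (j : ℕ) (x : D) :
    ‖iteratedFDeriv ℝ j (fun y => 1 - θ (R⁻¹ • y)) x‖ ≤
      (1 + SchwartzMap.seminorm ℂ 0 j θ) * (‖x‖ / R) := by
  have hR0 : 0 < R := by linarith
  rcases lt_or_ge ‖x‖ R with hx | hx
  · have h : (fun y => 1 - θ (R⁻¹ • y)) =ᶠ[𝓝 x] fun _ => 0 := by
      filter_upwards [(isOpen_lt continuous_norm continuous_const).mem_nhds hx] with y hy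
      rw [hθ, sub_self]
      rw [norm_smul, norm_inv, Real.norm_of_nonneg hR0.le, inv_mul_lt_one₀ hR0]
      exact hy
    rw [(h.iteratedFDeriv ℝ j).eq_of_nhds]
    have : iteratedFDeriv ℝ j (fun _ : D => (0 : ℂ)) x = 0 := by
      rw [iteratedFDeriv_fun_zero]; rfl
    rw [this, norm_zero]
    have : 0 ≤ SchwartzMap.seminorm ℂ 0 j θ := apply_nonneg _ _
    positivity
  · have hc : ContDiff ℝ j fun y => θ (R⁻¹ • y) := (θ.smooth j).comp (contDiff_const_smul _)
    have h1 : ‖iteratedFDeriv ℝ j (fun _ : D => (1 : ℂ)) x‖ ≤ 1 := by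
      rcases Nat.eq_zero_or_pos j with rfl | hj
      · simp
      · rw [iteratedFDeriv_const_of_ne hj.ne']; simp
    have h2 : ‖iteratedFDeriv ℝ j (fun y => θ (R⁻¹ • y)) x‖ ≤ SchwartzMap.seminorm ℂ 0 j θ := by
      have := (R⁻¹ • ContinuousLinearMap.id ℝ D).iteratedFDeriv_comp_right (θ.smooth j) x le_rfl
      have he : (θ ∘ (R⁻¹ • ContinuousLinearMap.id ℝ D)) = fun y => θ (R⁻¹ • y) := rfl
      rw [← he, this]
      refine (ContinuousMultilinearMap.norm_compContinuousLinearMap_le _ _).trans ?_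
      refine le_trans ?_ (by simpa using θ.le_seminorm ℂ 0 j (R⁻¹ • x))
      refine mul_le_of_le_one_right (norm_nonneg _) ?_
      refine Finset.prod_le_one (fun _ _ => norm_nonneg _) fun _ _ => ?_
      refine (norm_smul_le _ _).trans (mul_le_one₀ ?_ (norm_nonneg _)
        ContinuousLinearMap.norm_id_le)
      rw [norm_inv, Real.norm_of_nonneg hR0.le]
      exact inv_le_one_of_one_le₀ hR
    have h3 : iteratedFDeriv ℝ j (fun y => 1 - θ (R⁻¹ • y)) x =
        iteratedFDeriv ℝ j (fun _ : D => (1 : ℂ)) x - iteratedFDeriv ℝ j (fun y => θ (R⁻¹ • y)) x :=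
      iteratedFDeriv_sub_apply contDiff_const.contDiffAt hc.contDiffAt
    have h4 : 1 ≤ ‖x‖ / R := (one_le_div hR0).2 hx
    rw [h3]
    calc _ ≤ 1 + SchwartzMap.seminorm ℂ 0 j θ := (norm_sub_le _ _).trans (add_le_add h1 h2)
      _ ≤ _ := le_mul_of_one_le_right (add_nonneg zero_le_one (apply_nonneg _ _)) h4

theorem mem_closure_hasCompactSupport [FiniteDimensional ℝ D] (F : 𝓢(D, ℂ)) :
    F ∈ closure {G : 𝓢(D, ℂ) | HasCompactSupport G} := by
  let χ : ContDiffBump (0 : D) := ⟨1, 2, one_pos, one_lt_two⟩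
  have hχc : HasCompactSupport fun x => (χ x : ℂ) :=
    χ.hasCompactSupport.comp_left (g := fun t : ℝ => (t : ℂ)) rfl
  let θ : 𝓢(D, ℂ) := hχc.toSchwartzMap (Complex.ofRealCLM.contDiff.comp χ.contDiff)
  have hθ : ∀ x, ‖x‖ < 1 → θ x = 1 := fun x hx => by
    have : χ x = 1 := χ.one_of_mem_closedBall (by simpa using hx.le)
    change ((χ x : ℝ) : ℂ) = 1
    rw [this]; rfl
  have hθc : ∀ N : ℕ, HasCompactSupport fun x => θ (((N : ℝ) + 1)⁻¹ • x) := fun N =>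
    HasCompactSupport.comp_smul (f := θ) hχc (by positivity)
  have hs : ∀ N : ℕ, ContDiff ℝ ∞ fun x => θ (((N : ℝ) + 1)⁻¹ • x) := fun N =>
    (θ.smooth ⊤).comp (contDiff_const_smul _)
  let G : ℕ → 𝓢(D, ℂ) := fun N =>
    (HasCompactSupport.mul_right (hθc N) (f' := F)).toSchwartzMap ((hs N).mul (F.smooth ⊤))
  refine mem_closure_of_tendsto (f := G) (b := atTop) ?_
    (Eventually.of_forall fun N => (hθc N).mul_right)
  rw [(schwartz_withSeminorms ℂ D ℂ).tendsto_nhds]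
  rintro ⟨a, b⟩ ε hε
  set K : ℝ := ∑ j ∈ Finset.range (b + 1), (b.choose j : ℝ) *
    (1 + SchwartzMap.seminorm ℂ 0 j θ) * SchwartzMap.seminorm ℂ (a + 1) (b - j) F with hK
  have hK0 : 0 ≤ K := Finset.sum_nonneg fun j _ => by
    have h1 : 0 ≤ SchwartzMap.seminorm ℂ 0 j θ := apply_nonneg _ _
    have h2 : 0 ≤ SchwartzMap.seminorm ℂ (a + 1) (b - j) F := apply_nonneg _ _
    positivity
  have hlim : Tendsto (fun N : ℕ => K * (1 / ((N : ℝ) + 1))) atTop (𝓝 0) := by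
    simpa using tendsto_one_div_add_atTop_nhds_zero_nat.const_mul K
  filter_upwards [hlim.eventually (gt_mem_nhds hε)] with N hN
  refine lt_of_le_of_lt ?_ hN
  rw [schwartzSeminormFamily_apply]
  refine seminorm_le_bound ℂ a b _ (by positivity) fun x => ?_
  have hfun : ((G N - F : 𝓢(D, ℂ)) : D → ℂ) =
      -fun x => (1 - θ (((N : ℝ) + 1)⁻¹ • x)) * F x := by
    ext x
    have : G N x = θ (((N : ℝ) + 1)⁻¹ • x) * F x := rfl
    rw [sub_apply, this, Pi.neg_apply]
    ring
  rw [hfun, iteratedFDeriv_neg_apply, norm_neg]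
  have hleib := norm_iteratedFDeriv_mul_le (𝕜 := ℝ) (N := ∞)
    (f := fun x => 1 - θ (((N : ℝ) + 1)⁻¹ • x)) (g := F)
    (contDiff_const.sub (hs N)) (F.smooth ⊤) x (n := b) (by exact_mod_cast le_top)
  refine (mul_le_mul_of_nonneg_left hleib (by positivity)).trans ?_
  rw [hK, Finset.sum_mul, Finset.mul_sum]
  refine Finset.sum_le_sum fun j _ => ?_
  have h1 := norm_iteratedFDeriv_cutoff_le θ hθ (R := (N : ℝ) + 1) (by simp) j x
  have h2 := F.le_seminorm ℂ (a + 1) (b - j) x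
  have h3 : 0 ≤ SchwartzMap.seminorm ℂ 0 j θ := apply_nonneg _ _
  calc ‖x‖ ^ a * ((b.choose j : ℝ) *
          ‖iteratedFDeriv ℝ j (fun x => 1 - θ (((N : ℝ) + 1)⁻¹ • x)) x‖ *
        ‖iteratedFDeriv ℝ (b - j) F x‖)
      ≤ ‖x‖ ^ a * ((b.choose j : ℝ) *
          ((1 + SchwartzMap.seminorm ℂ 0 j θ) * (‖x‖ / ((N : ℝ) + 1))) *
        ‖iteratedFDeriv ℝ (b - j) F x‖) := by gcongr
    _ = (b.choose j : ℝ) * (1 + SchwartzMap.seminorm ℂ 0 j θ) *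
        (‖x‖ ^ (a + 1) * ‖iteratedFDeriv ℝ (b - j) F x‖) * (1 / ((N : ℝ) + 1)) := by ring
    _ ≤ _ := by gcongr

end

/-! ### Fourier series on the unit cube -/

section
variable {k : ℕ}

theorem summable_int_sq : Summable fun m : ℤ => ((1 + ‖m‖) ^ 2)⁻¹ := by
  have hn : Summable fun m : ℕ => ((1 + (m : ℝ)) ^ 2)⁻¹ := by
    have := (summable_nat_add_iff 1).2 (Real.summable_nat_pow_inv.2 one_lt_two)
    refine this.congr fun m => ?_
    push_cast
    rw [add_comm]
  refine Summable.of_nat_of_neg ?_ ?_ <;> simpa [Int.norm_eq_abs] using hn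

/-- `∑ (1 + ‖n‖)^(-2k)` over the lattice `ℤ^k` converges, being dominated by
`∏_j ∑_m (1 + |m|)^(-2)`. -/
theorem summable_lattice (k : ℕ) :
    Summable fun n : Fin k → ℤ => ((1 + ‖n‖) ^ (2 * k))⁻¹ := by
  classical
  set φ : ℤ → ℝ := fun m => ((1 + ‖m‖) ^ 2)⁻¹ with hφ
  have h0 : ∀ m : ℤ, 0 ≤ φ m := fun m => by positivity
  have hle : ∀ n : Fin k → ℤ, ((1 + ‖n‖) ^ (2 * k))⁻¹ ≤ ∏ j, φ (n j) := fun n => by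
    rw [Finset.prod_inv_distrib]
    refine inv_anti₀ (Finset.prod_pos fun j _ => by positivity) ?_
    have : ∏ j, (1 + ‖n j‖) ^ 2 ≤ ∏ _j : Fin k, (1 + ‖n‖) ^ 2 :=
      Finset.prod_le_prod (fun j _ => by positivity) fun j _ => by
        gcongr
        exact norm_le_pi_norm n j
    rwa [Finset.prod_const, Finset.card_univ, Fintype.card_fin, ← pow_mul] at this
  refine Summable.of_nonneg_of_le (fun n => by positivity) hle ?_
  clear_value φ
  refine summable_of_sum_le (c := ∏ _j : Fin k, ∑' m : ℤ, φ m)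
    (fun n => Finset.prod_nonneg fun j _ => h0 _) fun s => ?_
  calc ∑ n ∈ s, ∏ j, φ (n j)
      ≤ ∑ n ∈ Fintype.piFinset fun j => s.image fun n => n j, ∏ j, φ (n j) := by
        refine Finset.sum_le_sum_of_subset_of_nonneg (fun n hn => ?_)
          fun n _ _ => Finset.prod_nonneg fun j _ => h0 _
        exact Fintype.mem_piFinset.2 fun j => Finset.mem_image_of_mem _ hn
    _ = ∏ j, ∑ m ∈ s.image fun n => n j, φ m := by rw [Finset.prod_univ_sum]
    _ ≤ _ := by
        refine Finset.prod_le_prod (fun j _ => Finset.sum_nonneg fun m _ => h0 m) fun j _ => ?_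
        exact (hφ ▸ summable_int_sq).sum_le_tsum _ fun m _ => h0 m

/-- The plane wave `x ↦ exp (2πi n·x)`. -/
noncomputable def planeWave (n : Fin k → ℤ) (x : Fin k → ℝ) : ℂ :=
  Complex.exp (2 * Real.pi * Complex.I * ∑ j, (n j : ℂ) * x j)

theorem planeWave_eq_prod (n : Fin k → ℤ) (x : Fin k → ℝ) :
    planeWave n x = ∏ j, Complex.exp (2 * Real.pi * Complex.I * (n j * x j)) := by
  rw [planeWave, Finset.mul_sum, Complex.exp_sum]

theorem mFourier_coe (n : Fin k → ℤ) (x : Fin k → ℝ) :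
    UnitAddTorus.mFourier n (fun j => (x j : UnitAddCircle)) = planeWave n x := by
  rw [planeWave_eq_prod]
  change ∏ j, fourier (n j) (x j : UnitAddCircle) = _
  refine Finset.prod_congr rfl fun j _ => ?_
  rw [fourier_coe_apply]
  congr 1
  push_cast
  ring

/-- The integral `∫ exp (-2πi n·x) F x dx` over all of `ℝ^k`. For `F` supported in the unit cube
centred at `0` this is the `n`-th Fourier coefficient of `F` on that cube. -/
noncomputable def coeff (F : 𝓢(Fin k → ℝ, ℂ)) (n : Fin k → ℤ) : ℂ :=
  ∫ x, planeWave (-n) x * F x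

/-- A Schwartz function supported well inside the unit cube descends to the torus. -/
theorem exists_torus (F : 𝓢(Fin k → ℝ, ℂ)) (hF : ∀ x, (∃ j, 1 / 4 < |x j|) → F x = 0) :
    ∃ h : C(UnitAddTorus (Fin k), ℂ), ∀ x : Fin k → ℝ, (∀ j, |x j| ≤ 1 / 2) →
      h (fun j => (x j : UnitAddCircle)) = F x := by
  let K : Set (Fin k → ℝ) := Set.Icc (fun _ => -(1 / 2)) fun _ => 1 / 2
  have hK : ∀ x, x ∈ K ↔ ∀ j, |x j| ≤ 1 / 2 := fun x => by
    simp only [K, Set.mem_Icc, Pi.le_def, abs_le, forall_and]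
  have : CompactSpace K := isCompact_iff_compactSpace.1 isCompact_Icc
  let q : C(K, UnitAddTorus (Fin k)) :=
    ⟨fun x j => (x.1 j : UnitAddCircle), continuous_pi fun j =>
      (AddCircle.continuous_mk' 1).comp ((continuous_apply j).comp continuous_subtype_val)⟩
  have hq : Function.Surjective q := fun y => by
    have : ∀ j, ∃ t : ℝ, |t| ≤ 1 / 2 ∧ (t : UnitAddCircle) = y j := fun j => by
      have h := AddCircle.coe_image_Icc_eq (1 : ℝ) (-(1 / 2))
      obtain ⟨t, ht, hty⟩ := h.ge (Set.mem_univ (y j))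
      refine ⟨t, abs_le.2 ⟨ht.1, ?_⟩, hty⟩
      have := ht.2
      linarith
    choose t ht hty using this
    exact ⟨⟨t, (hK t).2 ht⟩, funext hty⟩
  have hquot : IsQuotientMap q := .of_surjective_continuous hq q.continuous
  let g : C(K, ℂ) := ⟨fun x => F x.1, F.continuous.comp continuous_subtype_val⟩
  have hfac : Function.FactorsThrough g q := by
    rintro ⟨a, ha⟩ ⟨b, hb⟩ hab
    rw [hK] at ha hb
    change F a = F b
    by_cases hne : a = b
    · rw [hne]
    obtain ⟨j, hj⟩ := Function.ne_iff.1 hne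
    have hab' : ((a j - b j : ℝ) : UnitAddCircle) = 0 := by
      rw [AddCircle.coe_sub, sub_eq_zero]
      exact congrFun hab j
    obtain ⟨m, hm⟩ := (AddCircle.coe_eq_zero_iff (1 : ℝ)).1 hab'
    rw [zsmul_eq_mul, mul_one] at hm
    have hm0 : m ≠ 0 := by
      rintro rfl
      exact hj (by simpa [eq_comm, sub_eq_zero] using hm)
    have hm1 : (1 : ℝ) ≤ |a j - b j| := by
      rw [← hm]
      exact_mod_cast Int.one_le_abs hm0
    have h1 := abs_sub (a j) (b j)
    have h2 := ha j
    have h3 := hb j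
    rw [hF a ⟨j, by linarith⟩, hF b ⟨j, by linarith⟩]
  refine ⟨hquot.lift g hfac, fun x hx => ?_⟩
  exact DFunLike.congr_fun (hquot.lift_comp g hfac) ⟨x, (hK x).2 hx⟩

theorem hasSum_coeff (F : 𝓢(Fin k → ℝ, ℂ)) (hF : ∀ x, (∃ j, 1 / 4 < |x j|) → F x = 0)
    (hs : Summable (coeff F)) (x : Fin k → ℝ) (hx : ∀ j, |x j| ≤ 1 / 2) :
    HasSum (fun n => coeff F n * planeWave n x) (F x) := by
  obtain ⟨h, hh⟩ := exists_torus F hF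
  have hc : UnitAddTorus.mFourierCoeff h = coeff F := by
    ext n
    rw [UnitAddTorus.mFourierCoeff_eq_integral h n (fun _ => -(1 / 2)), coeff]
    have hm : MeasurableSet
        {x : Fin k → ℝ | ∀ i, x i ∈ Set.Ioc (-(1 / 2) : ℝ) (-(1 / 2) + 1)} :=
      MeasurableSet.univ_pi' fun i => measurableSet_Ioc
    rw [← setIntegral_eq_integral_of_forall_compl_eq_zero (f := fun y => planeWave (-n) y * F y)
      (s := {x : Fin k → ℝ | ∀ i, x i ∈ Set.Ioc (-(1 / 2) : ℝ) (-(1 / 2) + 1)})]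
    · refine setIntegral_congr_fun hm fun y hy => ?_
      simp only [smul_eq_mul]
      rw [mFourier_coe, hh]
      intro j
      have := hy j
      exact abs_le.2 ⟨this.1.le, by linarith [this.2]⟩
    · intro y hy
      simp only [Set.mem_ofPred_eq, not_forall] at hy
      obtain ⟨j, hj⟩ := hy
      rw [hF y ⟨j, ?_⟩, mul_zero]
      by_contra hlt
      have := abs_le.1 (not_lt.1 hlt)
      exact hj ⟨by linarith, by linarith⟩
  have := UnitAddTorus.hasSum_mFourier_series_apply_of_summable (f := h) (hc ▸ hs)
    (fun j => (x j : UnitAddCircle))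
  rw [hc, hh x hx] at this
  simpa only [mFourier_coe, smul_eq_mul] using this

/-- The Fourier coefficients of `F` are values of its Fourier transform, hence decay rapidly. -/
theorem exists_coeff_decay (F : 𝓢(Fin k → ℝ, ℂ)) (N : ℕ) :
    ∃ C, 0 ≤ C ∧ ∀ n : Fin k → ℤ, (1 + ‖n‖) ^ N * ‖coeff F n‖ ≤ C := by
  let F₂ : 𝓢(EuclideanSpace ℝ (Fin k), ℂ) :=
    compCLMOfContinuousLinearEquiv ℂ (EuclideanSpace.equiv (Fin k) ℝ) F
  let Fhat : 𝓢(EuclideanSpace ℝ (Fin k), ℂ) := FourierTransform.fourier F₂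
  have key : ∀ n : Fin k → ℤ, coeff F n = Fhat (WithLp.toLp 2 fun j => (n j : ℝ)) := fun n => by
    have h : Fhat (WithLp.toLp 2 fun j => (n j : ℝ)) =
        FourierTransform.fourier (F₂ : EuclideanSpace ℝ (Fin k) → ℂ)
          (WithLp.toLp 2 fun j => (n j : ℝ)) := by
      rw [← SchwartzMap.fourier_coe]
    rw [h, Real.fourier_eq', coeff,
      ← (PiLp.volume_preserving_ofLp (Fin k)).integral_comp
        (MeasurableEquiv.toLp 2 (Fin k → ℝ)).symm.measurableEmbedding]
    refine integral_congr_ae (Eventually.of_forall fun v => ?_)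
    simp only [smul_eq_mul]
    congr 1
    rw [planeWave]
    congr 1
    simp [PiLp.inner_apply]
    ring_nf
  refine ⟨2 ^ N * (Finset.Iic (N, 0)).sup (fun m => SchwartzMap.seminorm ℂ m.1 m.2) Fhat,
    by positivity, fun n => ?_⟩
  rw [key]
  refine le_trans ?_ (one_add_le_sup_seminorm_apply (𝕜 := ℂ) (m := (N, 0)) le_rfl le_rfl Fhat
    (WithLp.toLp 2 fun j => (n j : ℝ)))
  rw [norm_iteratedFDeriv_zero]
  gcongr
  refine (pi_norm_le_iff_of_nonneg (norm_nonneg _)).2 fun j => ?_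
  have := PiLp.norm_apply_le (p := 2) (WithLp.toLp 2 fun j => (n j : ℝ)) j
  simpa [Int.norm_eq_abs] using this

end

/-! ### Density of pure tensors and uniqueness -/

section
variable {k : ℕ}

theorem iteratedDeriv_exp_mul_I (j : ℕ) :
    iteratedDeriv j (fun t : ℝ => Complex.exp (t * Complex.I)) =
      fun t : ℝ => Complex.I ^ j * Complex.exp (t * Complex.I) := by
  induction j with
  | zero => simp
  | succ j ih =>
    rw [iteratedDeriv_succ, ih]
    ext t
    have h : HasDerivAt (fun t : ℝ => Complex.exp (t * Complex.I))
        (Complex.exp (t * Complex.I) * (1 * Complex.I)) t :=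
      ((hasDerivAt_id t).ofReal_comp.mul_const Complex.I).cexp
    rw [(h.const_mul _).deriv]
    ring

theorem contDiff_exp_mul_I : ContDiff ℝ ∞ fun t : ℝ => Complex.exp (t * Complex.I) :=
  (Complex.ofRealCLM.contDiff.mul contDiff_const).cexp

/-- The phase `x ↦ 2π n·x` as a linear form. -/
noncomputable def phase (n : Fin k → ℤ) : (Fin k → ℝ) →L[ℝ] ℝ :=
  ∑ j, (2 * Real.pi * n j) • ContinuousLinearMap.proj j

theorem planeWave_eq_comp (n : Fin k → ℤ) :
    planeWave n = (fun t : ℝ => Complex.exp (t * Complex.I)) ∘ phase n := by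
  ext x
  simp only [planeWave, phase, Function.comp_apply, sum_apply, smul_apply,
    ContinuousLinearMap.proj_apply, smul_eq_mul]
  congr 1
  push_cast
  rw [Finset.mul_sum, Finset.sum_mul]
  refine Finset.sum_congr rfl fun j _ => by ring

theorem contDiff_planeWave (n : Fin k → ℤ) : ContDiff ℝ ∞ (planeWave n) := by
  rw [planeWave_eq_comp]
  exact contDiff_exp_mul_I.comp (phase n).contDiff

theorem norm_phase_le (n : Fin k → ℤ) : ‖phase n‖ ≤ 2 * Real.pi * k * ‖n‖ := by
  refine ContinuousLinearMap.opNorm_le_bound _ (by positivity) fun x => ?_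
  simp only [phase, sum_apply, smul_apply, ContinuousLinearMap.proj_apply, smul_eq_mul]
  calc ‖∑ j, 2 * Real.pi * n j * x j‖ ≤ ∑ j, ‖2 * Real.pi * n j * x j‖ := norm_sum_le _ _
    _ ≤ ∑ _j : Fin k, 2 * Real.pi * ‖n‖ * ‖x‖ := by
        refine Finset.sum_le_sum fun j _ => ?_
        rw [norm_mul, norm_mul, Real.norm_of_nonneg (by positivity : (0 : ℝ) ≤ 2 * Real.pi)]
        gcongr
        · rw [Real.norm_eq_abs, ← Int.norm_eq_abs]
          exact norm_le_pi_norm n j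
        · exact norm_le_pi_norm x j
    _ = _ := by
        rw [Finset.sum_const, Finset.card_univ, Fintype.card_fin, nsmul_eq_mul]
        ring

theorem norm_iteratedFDeriv_planeWave_le (n : Fin k → ℤ) {j b : ℕ} (hj : j ≤ b) (x : Fin k → ℝ) :
    ‖iteratedFDeriv ℝ j (planeWave n) x‖ ≤ ((1 + 2 * Real.pi * k) * (1 + ‖n‖)) ^ b := by
  have hp : ‖phase n‖ ≤ (1 + 2 * Real.pi * k) * (1 + ‖n‖) := by
    have h1 : 0 ≤ 2 * Real.pi * k := by positivity
    nlinarith [norm_phase_le n, norm_nonneg n]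
  have h1 : 1 ≤ (1 + 2 * Real.pi * k) * (1 + ‖n‖) :=
    one_le_mul_of_one_le_of_one_le (by simp; positivity) (by simp)
  rw [planeWave_eq_comp, (phase n).iteratedFDeriv_comp_right contDiff_exp_mul_I x
    (by exact_mod_cast le_top)]
  refine (ContinuousMultilinearMap.norm_compContinuousLinearMap_le _ _).trans ?_
  rw [norm_iteratedFDeriv_eq_norm_iteratedDeriv, iteratedDeriv_exp_mul_I, norm_mul, norm_pow,
    Complex.norm_I, one_pow, Complex.norm_exp_ofReal_mul_I, one_mul, one_mul,
    Finset.prod_const, Finset.card_univ, Fintype.card_fin]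
  exact (pow_le_pow_left₀ (norm_nonneg _) hp j).trans (pow_le_pow_right₀ h1 hj)

/-- A smooth function supported in the cube of side `1/2` is the sum of its Fourier series,
cut off by a fixed tensor bump; the terms are compactly supported pure tensors, and the series
converges in the Schwartz topology. -/
theorem mem_closure_of_small_support (F : 𝓢(Fin k → ℝ, ℂ))
    (hF : ∀ x, (∃ j, 1 / 4 < |x j|) → F x = 0) :
    F ∈ closure (Submodule.span ℂ (compactTensors k) : Set 𝓢(Fin k → ℝ, ℂ)) := by
  let χ : ContDiffBump (0 : ℝ) := ⟨1 / 4, 1 / 2, by norm_num, by norm_num⟩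
  have hχ1 : ∀ t : ℝ, |t| ≤ 1 / 4 → χ t = 1 := fun t ht =>
    χ.one_of_mem_closedBall (by rwa [Metric.mem_closedBall, Real.dist_0_eq_abs])
  have hχ0 : ∀ t : ℝ, 1 / 2 ≤ |t| → χ t = 0 := fun t ht =>
    χ.zero_of_le_dist (by rwa [Real.dist_0_eq_abs])
  have hχc : HasCompactSupport fun t => (χ t : ℂ) :=
    χ.hasCompactSupport.comp_left (g := fun t : ℝ => (t : ℂ)) rfl
  have hχs : ContDiff ℝ ∞ fun t => (χ t : ℂ) := Complex.ofRealCLM.contDiff.comp χ.contDiff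
  have hws : ∀ m : ℤ, ContDiff ℝ ∞ fun t : ℝ =>
      (χ t : ℂ) * Complex.exp (2 * Real.pi * Complex.I * (m * t)) := fun m =>
    hχs.mul (contDiff_const.mul (contDiff_const.mul Complex.ofRealCLM.contDiff)).cexp
  have hwc : ∀ m : ℤ, HasCompactSupport fun t : ℝ =>
      (χ t : ℂ) * Complex.exp (2 * Real.pi * Complex.I * (m * t)) := fun m => hχc.mul_right
  let w : ℤ → 𝓢(ℝ, ℂ) := fun m => (hwc m).toSchwartzMap (hws m)
  have hU : ∀ n : Fin k → ℤ, ∃ U : 𝓢(Fin k → ℝ, ℂ), IsTensor (fun j => w (n j)) U :=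
    fun n => exists_isTensor _ fun j => hwc (n j)
  choose U hU using hU
  set P : (Fin k → ℝ) → ℂ := fun x => ∏ j, (χ (x j) : ℂ) with hP
  have hUx : ∀ n x, U n x = P x * planeWave n x := fun n x => by
    rw [hU n x, planeWave_eq_prod, hP, ← Finset.prod_mul_distrib]
    rfl
  have hU0 : ∀ x, U 0 x = P x := fun x => by simp [hUx, planeWave]
  have hPF : ∀ x, P x * F x = F x := fun x => by
    by_cases hx : ∃ j, 1 / 4 < |x j|
    · rw [hF x hx, mul_zero]
    · push Not at hx
      have : P x = 1 := Finset.prod_eq_one fun j _ => by rw [hχ1 _ (hx j)]; rfl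
      rw [this, one_mul]
  -- polynomial growth of the seminorms of the cut off plane waves
  have hsemi : ∀ a b, ∃ C, 0 ≤ C ∧ ∀ n, SchwartzMap.seminorm ℂ a b (U n) ≤
      C * (1 + ‖n‖) ^ b := fun a b => by
    have hnn : ∀ j, 0 ≤ SchwartzMap.seminorm ℂ a j (U 0) := fun j => apply_nonneg _ _
    refine ⟨∑ j ∈ Finset.range (b + 1), (b.choose j : ℝ) *
      SchwartzMap.seminorm ℂ a j (U 0) * (1 + 2 * Real.pi * k) ^ b,
      Finset.sum_nonneg fun j _ => by have := hnn j; positivity, fun n => ?_⟩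
    refine seminorm_le_bound ℂ a b _ (mul_nonneg (Finset.sum_nonneg fun j _ => by
      have := hnn j; positivity) (by positivity)) fun x => ?_
    have hfun : (U n : (Fin k → ℝ) → ℂ) = fun x => U 0 x * planeWave n x := by
      ext x; rw [hU0, hUx]
    rw [hfun]
    have hleib := norm_iteratedFDeriv_mul_le (𝕜 := ℝ) (N := ∞) (f := U 0) (g := planeWave n)
      ((U 0).smooth ⊤) (contDiff_planeWave n) x (n := b) (by exact_mod_cast le_top)
    refine (mul_le_mul_of_nonneg_left hleib (by positivity)).trans ?_
    rw [Finset.sum_mul, Finset.mul_sum]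
    refine Finset.sum_le_sum fun j _ => ?_
    have h1 := norm_iteratedFDeriv_planeWave_le n (Nat.sub_le b j) x
    have h2 := (U 0).le_seminorm ℂ a j x
    calc ‖x‖ ^ a * ((b.choose j : ℝ) * ‖iteratedFDeriv ℝ j (U 0) x‖ *
          ‖iteratedFDeriv ℝ (b - j) (planeWave n) x‖)
        = (b.choose j : ℝ) * (‖x‖ ^ a * ‖iteratedFDeriv ℝ j (U 0) x‖) *
          ‖iteratedFDeriv ℝ (b - j) (planeWave n) x‖ := by ring
      _ ≤ (b.choose j : ℝ) * SchwartzMap.seminorm ℂ a j (U 0) *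
          ((1 + 2 * Real.pi * k) * (1 + ‖n‖)) ^ b := by
        have := hnn j
        gcongr
      _ = _ := by rw [mul_pow]; ring
  have hdecay : ∀ b, ∃ C, ∀ n, (1 + ‖n‖) ^ b * ‖coeff F n‖ ≤ C * ((1 + ‖n‖) ^ (2 * k))⁻¹ :=
    fun b => by
      obtain ⟨C, -, hC⟩ := exists_coeff_decay F (2 * k + b)
      refine ⟨C, fun n => ?_⟩
      rw [le_mul_inv_iff₀ (by positivity)]
      refine le_trans (le_of_eq ?_) (hC n)
      rw [pow_add]; ring
  have hsum : Summable (coeff F) := by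
    obtain ⟨C, hC⟩ := hdecay 0
    refine Summable.of_norm_bounded ((summable_lattice k).mul_left C) fun n => ?_
    simpa using hC n
  have hmain : HasSum (fun n => coeff F n • U n) F := by
    refine hasSum_schwartz (fun x => ?_) fun a b => ?_
    · simp only [smul_apply, smul_eq_mul, hUx]
      by_cases hx : ∀ j, |x j| ≤ 1 / 2
      · have := (hasSum_coeff F hF hsum x hx).mul_left (P x)
        rw [hPF] at this
        refine this.congr_fun fun n => ?_
        ring
      · push Not at hx
        obtain ⟨j, hj⟩ := hx
        have hP0 : P x = 0 :=
          Finset.prod_eq_zero (Finset.mem_univ j) (by rw [hχ0 _ hj.le]; rfl)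
        simp only [hP0, zero_mul, mul_zero]
        rw [hF x ⟨j, by linarith⟩]
        exact hasSum_zero
    · obtain ⟨C₁, h1, hC₁⟩ := hsemi a b
      obtain ⟨C₂, hC₂⟩ := hdecay b
      refine Summable.of_nonneg_of_le (fun n => apply_nonneg _ _) (fun n => ?_)
        ((summable_lattice k).mul_left (C₁ * C₂))
      rw [map_smul_eq_mul]
      calc ‖coeff F n‖ * SchwartzMap.seminorm ℂ a b (U n)
          ≤ ‖coeff F n‖ * (C₁ * (1 + ‖n‖) ^ b) := by gcongr; exact hC₁ n
        _ = C₁ * ((1 + ‖n‖) ^ b * ‖coeff F n‖) := by ring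
        _ ≤ C₁ * (C₂ * ((1 + ‖n‖) ^ (2 * k))⁻¹) := mul_le_mul_of_nonneg_left (hC₂ n) h1
        _ = _ := by ring
  refine mem_closure_of_tendsto hmain (Eventually.of_forall fun s => ?_)
  exact Submodule.sum_mem _ fun n _ => Submodule.smul_mem _ _ <|
    Submodule.subset_span ⟨fun j => w (n j), fun j => hwc (n j), hU n⟩

/-- The dilation `F ↦ F (c · )` of Schwartz functions. -/
noncomputable def dilate {D : Type*} [NormedAddCommGroup D] [NormedSpace ℝ D] (c : ℝˣ) :
    𝓢(D, ℂ) →L[ℂ] 𝓢(D, ℂ) :=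
  compCLMOfContinuousLinearEquiv ℂ (ContinuousLinearEquiv.smulLeft (R₁ := ℝ) (M₁ := D) c)

theorem dilate_apply {D : Type*} [NormedAddCommGroup D] [NormedSpace ℝ D] (c : ℝˣ)
    (F : 𝓢(D, ℂ)) (x : D) : dilate c F x = F ((c : ℝ) • x) := rfl

theorem dilate_mem_compactTensors (c : ℝˣ) {F : 𝓢(Fin k → ℝ, ℂ)} (hF : F ∈ compactTensors k) :
    dilate c F ∈ compactTensors k := by
  obtain ⟨f, hf, hF⟩ := hF
  refine ⟨fun j => dilate c (f j), fun j => ?_, fun x => ?_⟩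
  · have h : (dilate c (f j) : ℝ → ℂ) = fun t => f j ((c : ℝ) • t) := rfl
    rw [h]
    exact (hf j).comp_smul c.ne_zero
  · rw [dilate_apply, hF]
    rfl

/-- Compactly supported functions reduce to the case of small support by dilation, which preserves
pure tensors. -/
theorem mem_closure_of_hasCompactSupport (F : 𝓢(Fin k → ℝ, ℂ)) (hF : HasCompactSupport F) :
    F ∈ closure (Submodule.span ℂ (compactTensors k) : Set 𝓢(Fin k → ℝ, ℂ)) := by
  obtain ⟨r, hr⟩ := hF.isCompact.isBounded.subset_closedBall 0
  set R : ℝ := max r 1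
  have hR0 : 0 < R := lt_of_lt_of_le one_pos (le_max_right _ _)
  have hFR : ∀ x, R < ‖x‖ → F x = 0 := fun x hx => by
    refine image_eq_zero_of_notMem_tsupport fun hmem => ?_
    have := mem_closedBall_zero_iff.1 (hr hmem)
    exact absurd (this.trans (le_max_left _ _)) (not_le.2 hx)
  let c : ℝˣ := Units.mk0 (4 * R) (by positivity)
  have hc : (c : ℝ) = 4 * R := rfl
  have hmem := mem_closure_of_small_support (dilate c F) fun x ⟨j, hj⟩ => by
    rw [dilate_apply]
    apply hFR
    rw [hc, norm_smul, Real.norm_of_nonneg (by positivity)]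
    have : |x j| ≤ ‖x‖ := norm_le_pi_norm x j
    nlinarith
  have hback : dilate c⁻¹ (dilate c F) = F := by
    ext x
    rw [dilate_apply, dilate_apply, smul_smul, Units.mul_inv, one_smul]
  rw [← hback]
  refine map_mem_closure (dilate c⁻¹).continuous hmem ?_
  have hle : Submodule.span ℂ (compactTensors k) ≤
      (Submodule.span ℂ (compactTensors k)).comap (dilate c⁻¹).toLinearMap :=
    Submodule.span_le.2 fun G hG => Submodule.subset_span (dilate_mem_compactTensors c⁻¹ hG)
  exact fun G hG => hle hG

theorem dense_span_compactTensors (k : ℕ) :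
    Dense (Submodule.span ℂ (compactTensors k) : Set 𝓢(Fin k → ℝ, ℂ)) := fun F =>
  closure_minimal (fun G hG => mem_closure_of_hasCompactSupport G hG) isClosed_closure
    (mem_closure_hasCompactSupport F)

end

/-- Two extensions agree on pairs of compactly supported pure tensors, hence everywhere by density in
each argument. -/
theorem IsExtension.unique {i k : ℕ} {A : DVO i} {ℓ : Fin i → Fin k} {E E' : DVO k}
    (h : IsExtension i k A ℓ E) (h' : IsExtension i k A ℓ E') : E = E' := by
  refine ContinuousLinearMap.ext_on (dense_span_compactTensors k) ?_
  rintro F ⟨f, hf, hF⟩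
  refine ContinuousLinearMap.ext_on (dense_span_compactTensors k) ?_
  rintro G ⟨g, hg, hG⟩
  obtain ⟨F', hF'⟩ := exists_isTensor (fun a => f (ℓ a)) fun a => hf (ℓ a)
  obtain ⟨G', hG'⟩ := exists_isTensor (fun a => g (ℓ a)) fun a => hg (ℓ a)
  rw [h f g F G F' G' hF hG hF' hG', h' f g F G F' G' hF hG hF' hG']

/-- Existence and uniqueness of the `k`-particle extension of an `i`-particle distribution-valued
operator `A` in the variables `ℓ(1), …, ℓ(i)`, for an injection `ℓ : {1,…,i} → {1,…,k}`. -/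
theorem exists_unique_extension (i k : ℕ) (hi : 0 < i) (hik : i ≤ k)
    (A : DVO i) (ℓ : Fin i → Fin k) (hℓ : Function.Injective ℓ) :
    ∃! E : DVO k, IsExtension i k A ℓ E := by
  obtain ⟨E, hE⟩ := exists_isExtension i k A ℓ hℓ
  exact ⟨E, hE, fun E' hE' => IsExtension.unique hE' hE⟩
end

section
/- Let k ∈ ℕ. For every continuous linear map B : 𝓢'(ℝ^k) → 𝓢'(ℝ^k) (strong topologies) there exists a unique continuous linear map B* : 𝓢(ℝ^k) → 𝓢(ℝ^k) such that u(conj(B* g)) = (B u)(conj g) for all g ∈ 𝓢(ℝ^k) and u ∈ 𝓢'(ℝ^k). Moreover the map B ↦ B* is continuous from L(𝓢'(ℝ^k),𝓢'(ℝ^k)) to L(𝓢(ℝ^k),𝓢(ℝ^k)), both spaces carrying the topology of uniform convergence on bounded sets. -/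
/-!
The transpose of a strongly continuous `B : 𝓢' → 𝓢'` is an operator on the strong bidual of `𝓢`, so
everything rests on the semireflexivity of Schwartz space (`schwartz_semireflexive`). This comes from
the Heine–Borel property: the sets `schwartzBox E c`, cut out by bounds on all seminorms, are compact
(`isCompact_schwartzBox`), by an Arzelà–Ascoli argument for all derivatives together with the decay at
infinity. A strongly continuous functional `φ` on `𝓢'` is bounded by `1` on the polar of such a box;
Hahn–Banach separation in finite dimension shows that `φ` agrees with evaluation at a point of the
box on any finite set of distributions, and compactness then gives one point that works for all.

Hence there is a linear `T : 𝓢 → 𝓢` with `u (T g) = B u g`. Each Schwartz seminorm is the supremum of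
its polar (`seminorm_le_of_schwartzPolar`), and this polar is bounded in `𝓢'`. So `T` maps bounded
sets to bounded sets, and is therefore continuous as `𝓢` is first countable. The same polar estimate
shows that `B ↦ B*` is continuous at `0`, which suffices since it is additive. The adjoint is
`B* g = conj (T (conj g))`; it is unique because Dirac distributions separate Schwartz functions.
-/

open MeasureTheory SchwartzMap

/-- Tempered distributions on `ℝ^n`: the strong dual of Schwartz space. -/
abbrev TemperedDist (n : ℕ) : Type := SchwartzMap (Fin n → ℝ) ℂ →L[ℂ] ℂ

/-- `fc` is the complex conjugate of the Schwartz function `f`. -/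
def IsConjOf {n : ℕ} (f fc : SchwartzMap (Fin n → ℝ) ℂ) : Prop :=
  ∀ x, fc x = (starRingEnd ℂ) (f x)

/-- `Bstar : 𝓢(ℝ^n) → 𝓢(ℝ^n)` is the adjoint of `B : 𝓢'(ℝ^n) → 𝓢'(ℝ^n)`, characterized by
`u (conj (B* g)) = (B u)(conj g)` for all `g ∈ 𝓢(ℝ^n)` and `u ∈ 𝓢'(ℝ^n)`. -/
def IsAdjointOfDistOp {n : ℕ} (B : TemperedDist n →L[ℂ] TemperedDist n)
    (Bstar : SchwartzMap (Fin n → ℝ) ℂ →L[ℂ] SchwartzMap (Fin n → ℝ) ℂ) : Prop :=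
  ∀ (g w gc : SchwartzMap (Fin n → ℝ) ℂ), IsConjOf (Bstar g) w → IsConjOf g gc →
    ∀ u : TemperedDist n, u w = (B u) gc

open Filter Topology Bornology
open scoped ContDiff

/-! ### Heine–Borel for Schwartz space -/

section Compactness

variable {E : Type*} [NormedAddCommGroup E] [NormedSpace ℝ E]

/-- The set of Schwartz functions whose `(k, l)`-th seminorm is at most `c (k, l)` for all `k, l`.
A subset of Schwartz space is bounded iff it is contained in one of these sets. -/
def schwartzBox (E : Type*) [NormedAddCommGroup E] [NormedSpace ℝ E] (c : ℕ × ℕ → ℝ) :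
    Set 𝓢(E, ℂ) :=
  {f | ∀ i, schwartzSeminormFamily ℂ E ℂ i f ≤ c i}

/-- For a uniformly Lipschitz family, pointwise convergence is uniform on compact sets. -/
lemma tendstoUniformlyOn_of_lipschitzWith {ι X Y : Type*} [PseudoMetricSpace X]
    [PseudoMetricSpace Y] {l : Filter ι} {f : ι → X → Y} {g : X → Y} {L : NNReal}
    (hL : ∀ i, LipschitzWith L (f i)) (hfg : ∀ x, Tendsto (fun i => f i x) l (𝓝 (g x)))
    {K : Set X} (hK : IsCompact K) : TendstoUniformlyOn f g l K := by
  have h := (EquicontinuousOn.tendsto_uniformOnFun_iff_pi' (𝔖 := {K}) (F := f) (by simpa)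
    (fun K _ => (LipschitzWith.uniformEquicontinuous f L hL).equicontinuous.equicontinuousOn K)
    l g).2 (by
      rw [tendsto_pi_nhds]
      exact fun x => hfg x)
  rw [UniformOnFun.tendsto_iff_tendstoUniformlyOn] at h
  exact h K rfl

instance finiteDimensional_cmm [FiniteDimensional ℝ E] (l : ℕ) :
    FiniteDimensional ℝ (E [×l]→L[ℝ] ℂ) :=
  Module.Finite.of_injective
    (ContinuousMultilinearMap.toMultilinearMapLinear :
      (E [×l]→L[ℝ] ℂ) →ₗ[ℝ] MultilinearMap ℝ (fun _ : Fin l => E) ℂ)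
    ContinuousMultilinearMap.toMultilinearMap_injective

variable [FiniteDimensional ℝ E]

/-- Every ultrafilter on a family in a box converges in Schwartz space, with limit in the box. The
derivatives `D^l (F i) x` are bounded, hence converge to some `G x l`; since `D^(l+1) (F i)` is bounded
uniformly in `i`, the convergence is uniform on compact sets, so `G` is the Taylor series of the limit
`f`. The bound on the seminorm with weight `‖x‖ ^ (k+1)` controls the one with weight `‖x‖ ^ k` outside
large balls. -/
lemma exists_tendsto_of_mem_schwartzBox {c : ℕ × ℕ → ℝ} {ι : Type*} (𝓕 : Ultrafilter ι)
    (F : ι → 𝓢(E, ℂ)) (hF : ∀ i, F i ∈ schwartzBox E c) :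
    ∃ f ∈ schwartzBox E c, Tendsto F 𝓕 (𝓝 f) := by
  have hP : ∀ l, ProperSpace (E [×l]→L[ℝ] ℂ) := fun l => FiniteDimensional.proper ℝ _
  have hPE : ProperSpace E := FiniteDimensional.proper ℝ _
  have hb : ∀ i k l x, ‖x‖ ^ k * ‖iteratedFDeriv ℝ l (F i) x‖ ≤ c (k, l) := fun i k l x =>
    (SchwartzMap.le_seminorm ℂ k l (F i) x).trans (hF i (k, l))
  have hb0 : ∀ i l x, ‖iteratedFDeriv ℝ l (F i) x‖ ≤ c (0, l) := fun i l x => by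
    simpa using hb i 0 l x
  have hc : ∀ l k, 0 ≤ c (l, k) := by
    intro l k
    obtain ⟨i⟩ := 𝓕.neBot.nonempty
    exact (apply_nonneg _ _).trans (hF i (l, k))
  have hG : ∀ x l, ∃ G : E [×l]→L[ℝ] ℂ,
      Tendsto (fun i => iteratedFDeriv ℝ l (F i) x) 𝓕 (𝓝 G) := by
    intro x l
    obtain ⟨G, -, hG⟩ := (isCompact_closedBall (0 : E [×l]→L[ℝ] ℂ) (c (0, l))).ultrafilter_le_nhds
      (𝓕.map fun i => iteratedFDeriv ℝ l (F i) x) (by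
        simp only [le_principal_iff, Ultrafilter.coe_map]
        exact mem_map.2 (Eventually.of_forall fun i => mem_closedBall_zero_iff.2 (hb0 i l x)))
    exact ⟨G, hG⟩
  choose G hG using hG
  have hdiff : ∀ i l, Differentiable ℝ (iteratedFDeriv ℝ l (F i)) := fun i l =>
    ((F i).smooth ⊤).differentiable_iteratedFDeriv (by exact_mod_cast ENat.natCast_lt_top l)
  have hlip : ∀ l i, LipschitzWith (c (0, l + 1)).toNNReal (iteratedFDeriv ℝ l (F i)) := by
    intro l i
    refine lipschitzWith_of_nnnorm_fderiv_le (𝕜 := ℝ) (hdiff i l) fun x => ?_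
    rw [← NNReal.coe_le_coe, coe_nnnorm, norm_fderiv_iteratedFDeriv, Real.coe_toNNReal _ (hc _ _)]
    exact hb0 i (l + 1) x
  have hunif : ∀ l, ∀ K : Set E, IsCompact K →
      TendstoUniformlyOn (fun i => iteratedFDeriv ℝ l (F i)) (fun x => G x l) 𝓕 K :=
    fun l K hK => tendstoUniformlyOn_of_lipschitzWith (hlip l) (fun x => hG x l) hK
  have hderiv : ∀ l x, HasFDerivAt (fun y => G y l) (G x (l + 1)).curryLeft x := by
    intro l x
    have hx : Metric.closedBall x 1 ∈ 𝓝 x := Metric.closedBall_mem_nhds x one_pos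
    refine hasFDerivAt_of_tendstoUniformlyOnFilter (𝕜 := ℝ) (l := (𝓕 : Filter ι))
      (f := fun i => iteratedFDeriv ℝ l (F i))
      (f' := fun i y => (iteratedFDeriv ℝ (l + 1) (F i) y).curryLeft)
      (g' := fun y => (G y (l + 1)).curryLeft) ?_ ?_ ?_
    · have h1 := hunif (l + 1) _ (isCompact_closedBall x 1)
      have h2 := (continuousMultilinearCurryLeftEquiv ℝ (fun _ : Fin (l + 1) => E)
        ℂ).isometry.uniformContinuous.comp_tendstoUniformlyOn h1
      exact (tendstoUniformlyOn_iff_tendstoUniformlyOnFilter.1 h2).mono_right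
        (le_principal_iff.2 hx)
    · refine Eventually.of_forall fun p => ?_
      have := (hdiff p.1 l p.2).hasFDerivAt
      rw [fderiv_iteratedFDeriv] at this
      exact this
    · exact Eventually.of_forall fun y => hG y l
  let f₀ : E → ℂ := fun x => (G x 0).curry0
  have hT : HasFTaylorSeriesUpTo ∞ f₀ (fun x l => G x l) :=
    { zero_eq := fun x => rfl
      fderiv := fun m _ x => hderiv m x
      cont := fun m _ => continuous_iff_continuousAt.2 fun x => (hderiv m x).continuousAt }
  have hGf : ∀ x l, G x l = iteratedFDeriv ℝ l f₀ x := fun x l =>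
    hT.eq_iteratedFDeriv (by exact_mod_cast le_top) x
  have hbG : ∀ k l x, ‖x‖ ^ k * ‖iteratedFDeriv ℝ l f₀ x‖ ≤ c (k, l) := by
    intro k l x
    rw [← hGf]
    exact le_of_tendsto ((hG x l).norm.const_mul _) (Eventually.of_forall fun i => hb i k l x)
  let f : 𝓢(E, ℂ) := ⟨f₀, hT.contDiff, fun k l => ⟨c (k, l), hbG k l⟩⟩
  refine ⟨f, fun i => SchwartzMap.seminorm_le_bound ℂ i.1 i.2 f (hc _ _) (hbG i.1 i.2), ?_⟩
  rw [(schwartz_withSeminorms ℂ E ℂ).tendsto_nhds]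
  rintro ⟨k, l⟩ ε hε
  -- Beyond radius `R`, the bound with weight `k + 1` makes the weight-`k` difference at most `ε / 2`.
  obtain ⟨R, hR0, hR⟩ : ∃ R : ℝ, 0 < R ∧ 2 * c (k + 1, l) / R ≤ ε / 2 :=
    ⟨4 * (c (k + 1, l) + 1) / ε, by have := hc (k+1) l; positivity, by
      have := hc (k+1) l
      rw [div_div_eq_mul_div, div_le_div_iff₀ (by positivity) (by positivity)]
      nlinarith⟩
  have h1 := Metric.tendstoUniformlyOn_iff.1 (hunif l _ (isCompact_closedBall (0 : E) R))
    (ε / (2 * R ^ k)) (by positivity)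
  filter_upwards [h1] with i hi
  refine lt_of_le_of_lt (SchwartzMap.seminorm_le_bound ℂ k l (F i - f) (half_pos hε).le ?_)
    (half_lt_self hε)
  intro x
  have hsub : iteratedFDeriv ℝ l (F i - f : 𝓢(E, ℂ)) x
      = iteratedFDeriv ℝ l (F i) x - G x l := by
    rw [hGf]
    exact iteratedFDeriv_sub_apply ((F i).contDiffAt l) (f.contDiffAt l)
  rw [hsub]
  rcases le_or_gt ‖x‖ R with hx | hx
  · have h2 := hi x (by simpa using hx)
    rw [dist_comm, dist_eq_norm] at h2
    calc _ ≤ R ^ k * (ε / (2 * R ^ k)) := by gcongr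
      _ = ε / 2 := by field_simp
  · have hx0 : 0 < ‖x‖ := hR0.trans hx
    refine le_trans ?_ hR
    rw [le_div_iff₀ hR0]
    calc ‖x‖ ^ k * ‖iteratedFDeriv ℝ l (F i) x - G x l‖ * R
        ≤ ‖x‖ ^ k * (‖iteratedFDeriv ℝ l (F i) x‖ + ‖G x l‖) * ‖x‖ := by
          gcongr
          exact norm_sub_le _ _
      _ = ‖x‖ ^ (k + 1) * ‖iteratedFDeriv ℝ l (F i) x‖ + ‖x‖ ^ (k + 1) * ‖G x l‖ := by ring
      _ ≤ c (k + 1, l) + c (k + 1, l) := by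
          have := hbG (k + 1) l x
          rw [← hGf] at this
          exact add_le_add (hb i _ _ x) this
      _ = _ := by ring

lemma isCompact_schwartzBox (c : ℕ × ℕ → ℝ) : IsCompact (schwartzBox E c) := by
  rw [isCompact_iff_ultrafilter_le_nhds]
  intro 𝓕 h𝓕
  have hmem : Set.range (Subtype.val : schwartzBox E c → 𝓢(E, ℂ)) ∈ 𝓕 := by
    simpa using h𝓕
  obtain ⟨f, hf, hlim⟩ := exists_tendsto_of_mem_schwartzBox
    (𝓕.comap Subtype.val_injective hmem) Subtype.val (fun i => i.2)
  refine ⟨f, hf, ?_⟩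
  rw [Ultrafilter.coe_comap, Tendsto, map_comap_of_mem hmem] at hlim
  exact hlim

end Compactness

/-! ### Polars, semireflexivity and the transpose -/

section Duality

variable {E : Type*} [NormedAddCommGroup E] [NormedSpace ℝ E]

/-- The polar of the unit ball of the `i`-th Schwartz seminorm: the distributions dominated by it. -/
def schwartzPolar (E : Type*) [NormedAddCommGroup E] [NormedSpace ℝ E] (i : ℕ × ℕ) :
    Set (𝓢(E, ℂ) →L[ℂ] ℂ) :=
  {u | ∀ f, ‖u f‖ ≤ schwartzSeminormFamily ℂ E ℂ i f}

lemma isVonNBounded_schwartzPolar (i : ℕ × ℕ) : IsVonNBounded ℂ (schwartzPolar E i) := by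
  rw [ContinuousLinearMap.isVonNBounded_iff]
  intro s hs
  obtain ⟨r, -, hr⟩ := (schwartz_withSeminorms ℂ E ℂ).isVonNBounded_iff_seminorm_bounded.1 hs i
  rw [NormedSpace.isVonNBounded_iff, isBounded_iff_forall_norm_le]
  refine ⟨r, ?_⟩
  rintro _ ⟨u, hu, f, hf, rfl⟩
  exact (hu f).trans (hr f hf).le

/-- A Schwartz seminorm is the supremum of its polar. The polar contains the functionals
`g ↦ ‖x‖ ^ k * D^l g(x)(m) / ∏ ‖m j‖`, which already compute the seminorm. -/
lemma seminorm_le_of_schwartzPolar (i : ℕ × ℕ) (f : 𝓢(E, ℂ)) {C : ℝ} (hC : 0 ≤ C)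
    (h : ∀ u ∈ schwartzPolar E i, ‖u f‖ ≤ C) : schwartzSeminormFamily ℂ E ℂ i f ≤ C := by
  obtain ⟨k, l⟩ := i
  refine SchwartzMap.seminorm_le_bound ℂ k l f hC fun x => ?_
  rcases eq_or_ne (‖x‖ ^ k) 0 with hx | hx
  · simpa [hx] using hC
  have hx' : 0 < ‖x‖ ^ k := lt_of_le_of_ne (by positivity) hx.symm
  rw [← le_div_iff₀' hx']
  refine ContinuousMultilinearMap.opNorm_le_bound (by positivity) fun m => ?_
  rcases eq_or_ne (∏ j, ‖m j‖) 0 with hm | hm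
  · obtain ⟨j, -, hj⟩ := Finset.prod_eq_zero_iff.1 hm
    rw [ContinuousMultilinearMap.map_coord_zero _ j (norm_eq_zero.1 hj), norm_zero]
    positivity
  have hm' : 0 < ∏ j, ‖m j‖ := lt_of_le_of_ne (by positivity) hm.symm
  have hb : ∀ g : 𝓢(E, ℂ), ‖((‖x‖ ^ k / ∏ j, ‖m j‖ : ℝ) : ℂ) * iteratedFDeriv ℝ l g x m‖
      ≤ schwartzSeminormFamily ℂ E ℂ (k, l) g := by
    intro g
    refine le_trans ?_ (SchwartzMap.le_seminorm ℂ k l g x)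
    rw [norm_mul, Complex.norm_real, Real.norm_of_nonneg (by positivity), div_mul_eq_mul_div,
      div_le_iff₀ hm', mul_assoc]
    gcongr
    exact ContinuousMultilinearMap.le_opNorm _ _
  let u : 𝓢(E, ℂ) →L[ℂ] ℂ := SchwartzMap.mkCLMtoNormedSpace (σ := RingHom.id ℂ)
    (fun g => ((‖x‖ ^ k / ∏ j, ‖m j‖ : ℝ) : ℂ) * iteratedFDeriv ℝ l g x m)
    (fun g₁ g₂ => by
      have : iteratedFDeriv ℝ l (g₁ + g₂ : 𝓢(E, ℂ)) x
          = iteratedFDeriv ℝ l g₁ x + iteratedFDeriv ℝ l g₂ x :=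
        iteratedFDeriv_add_apply (g₁.contDiffAt l) (g₂.contDiffAt l)
      rw [this, add_apply, mul_add])
    (fun a g => by
      have : iteratedFDeriv ℝ l (a • g : 𝓢(E, ℂ)) x = a • iteratedFDeriv ℝ l g x :=
        iteratedFDeriv_const_smul_apply (g.contDiffAt l)
      rw [this, smul_apply, RingHom.id_apply, smul_eq_mul, smul_eq_mul]
      ring)
    ⟨{(k, l)}, 1, zero_le_one, fun g => by simpa using hb g⟩
  have hu := h u hb
  change ‖((‖x‖ ^ k / ∏ j, ‖m j‖ : ℝ) : ℂ) * iteratedFDeriv ℝ l f x m‖ ≤ C at hu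
  rw [norm_mul, Complex.norm_real, Real.norm_of_nonneg (by positivity), div_mul_eq_mul_div,
      div_le_iff₀ hm'] at hu
  rw [div_mul_eq_mul_div, le_div_iff₀' hx']
  exact hu

lemma schwartz_ext_of_dual {f g : 𝓢(E, ℂ)} (h : ∀ u : 𝓢(E, ℂ) →L[ℂ] ℂ, u f = u g) : f = g := by
  ext x
  exact h (TemperedDistribution.delta x)

variable [FiniteDimensional ℝ E]

/-- If `φ` is bounded by `1` on the polar of a box, then on finitely many distributions it agrees with
evaluation at a point of the box. Otherwise a functional on `ℂ^s` separates the vector `(φ u)_u` from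
the compact convex image of the box, and the corresponding combination `v` of the distributions
violates the bound on `φ v`. -/
lemma exists_mem_schwartzBox_forall_finset {c : ℕ × ℕ → ℝ} (hc : ∀ i, 0 ≤ c i)
    (φ : (𝓢(E, ℂ) →L[ℂ] ℂ) →ₗ[ℂ] ℂ)
    (hφ : ∀ u, (∀ f ∈ schwartzBox E c, ‖u f‖ ≤ 1) → ‖φ u‖ ≤ 1)
    (s : Finset (𝓢(E, ℂ) →L[ℂ] ℂ)) : ∃ f ∈ schwartzBox E c, ∀ u ∈ s, u f = φ u := by
  classical
  let ev : 𝓢(E, ℂ) →L[ℂ] (s → ℂ) := ContinuousLinearMap.pi fun u => (u : 𝓢(E, ℂ) →L[ℂ] ℂ)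
  have hconv : Convex ℝ (schwartzBox E c) := by
    intro f hf g hg a b ha hb hab i
    have h1 : schwartzSeminormFamily ℂ E ℂ i (a • f) = a * schwartzSeminormFamily ℂ E ℂ i f := by
      rw [← Complex.coe_smul, map_smul_eq_mul, Complex.norm_real, Real.norm_of_nonneg ha]
    have h2 : schwartzSeminormFamily ℂ E ℂ i (b • g) = b * schwartzSeminormFamily ℂ E ℂ i g := by
      rw [← Complex.coe_smul, map_smul_eq_mul, Complex.norm_real, Real.norm_of_nonneg hb]
    calc _ ≤ _ := map_add_le_add _ _ _
      _ ≤ a * c i + b * c i := by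
        rw [h1, h2]
        exact add_le_add (mul_le_mul_of_nonneg_left (hf i) ha)
          (mul_le_mul_of_nonneg_left (hg i) hb)
      _ = c i := by rw [← add_mul, hab, one_mul]
  by_contra! hcon
  have hnot : (fun u : s => φ u) ∉ ev '' schwartzBox E c := by
    rintro ⟨f, hf, hfe⟩
    obtain ⟨u, hu, hne⟩ := hcon f hf
    exact hne (congrFun hfe ⟨u, hu⟩)
  obtain ⟨g, t, hlt, hgt⟩ := RCLike.geometric_hahn_banach_closed_point (𝕜 := ℂ)
    (hconv.is_linear_image (f := ev) ⟨ev.map_add, fun a f => by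
      rw [← Complex.coe_smul, map_smul, Complex.coe_smul]⟩)
    ((isCompact_schwartzBox c).image ev.continuous).isClosed hnot
  have h0 : (0 : 𝓢(E, ℂ)) ∈ schwartzBox E c := fun i => by simpa using hc i
  have ht : 0 < t := by simpa using hlt _ ⟨0, h0, rfl⟩
  -- `v` is the combination of the members of `s` with `v f = g (ev f)` and `φ v = g (φ u)_u`.
  let v : 𝓢(E, ℂ) →L[ℂ] ℂ := ∑ u : s, g (Pi.single u 1) • (u : 𝓢(E, ℂ) →L[ℂ] ℂ)
  have hg : ∀ y : s → ℂ, g y = ∑ u : s, g (Pi.single u 1) * y u := by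
    intro y
    conv_lhs => rw [pi_eq_sum_univ' y]
    rw [map_sum]
    refine Finset.sum_congr rfl fun u _ => ?_
    rw [map_smul, smul_eq_mul, mul_comm]
  have hv : ∀ f, v f = g (ev f) := by
    intro f
    rw [hg]
    simp [v, ev]
  have hφv : φ v = g (fun u : s => φ u) := by
    rw [hg]
    simp [v]
  have hvt : ∀ f ∈ schwartzBox E c, ‖v f‖ ≤ t := by
    intro f hf
    -- The box is invariant under unimodular scalars, so bounding `re (v f)` bounds `‖v f‖`.
    obtain ⟨z, hz, hzf⟩ : ∃ z : ℂ, ‖z‖ = 1 ∧ z * v f = ‖v f‖ := by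
      rcases eq_or_ne (v f) 0 with h | h
      · exact ⟨1, by simp, by simp [h]⟩
      · refine ⟨‖v f‖ / v f, ?_, div_mul_cancel₀ _ h⟩
        rw [norm_div, Complex.norm_real, norm_norm, div_self (norm_ne_zero_iff.2 h)]
    have hzmem : z • f ∈ schwartzBox E c := fun i => by
      rw [map_smul_eq_mul, hz, one_mul]
      exact hf i
    have := hlt _ ⟨z • f, hzmem, rfl⟩
    rw [← hv, map_smul, smul_eq_mul, hzf] at this
    simpa using this.le
  have h1 := hφ (((t⁻¹ : ℝ) : ℂ) • v) fun f hf => by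
    rw [smul_apply, norm_smul, Complex.norm_real,
      Real.norm_of_nonneg (by positivity), inv_mul_le_one₀ ht]
    exact hvt f hf
  rw [map_smul, norm_smul, Complex.norm_real, Real.norm_of_nonneg (by positivity),
    inv_mul_le_one₀ ht, hφv] at h1
  exact absurd (hgt.trans_le (RCLike.re_le_norm _)) (not_lt.2 h1)

/-- Schwartz space is semireflexive: every strongly continuous functional on the tempered
distributions is evaluation at a Schwartz function. -/
theorem schwartz_semireflexive (φ : (𝓢(E, ℂ) →L[ℂ] ℂ) →L[ℂ] ℂ) :
    ∃ f : 𝓢(E, ℂ), ∀ u, u f = φ u := by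
  obtain ⟨⟨S, V⟩, ⟨hS, hV⟩, hSV⟩ := (ContinuousLinearMap.hasBasis_nhds_zero
    (σ := RingHom.id ℂ) (E := 𝓢(E, ℂ)) (F := ℂ)).mem_iff.1
    (φ.continuous.continuousAt.preimage_mem_nhds (x := 0) (t := Metric.closedBall 0 1)
      (by simpa using Metric.closedBall_mem_nhds (0 : ℂ) one_pos))
  obtain ⟨ε, hε, hεV⟩ := Metric.nhds_basis_closedBall.mem_iff.1 hV
  have hS' := (schwartz_withSeminorms ℂ E ℂ).isVonNBounded_iff_seminorm_bounded.1 hS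
  choose r hr0 hr using hS'
  let c : ℕ × ℕ → ℝ := fun i => ε⁻¹ * r i
  have hφ : ∀ u, (∀ f ∈ schwartzBox E c, ‖u f‖ ≤ 1) → ‖φ u‖ ≤ 1 := by
    intro u hu
    have : u ∈ φ ⁻¹' Metric.closedBall 0 1 := hSV fun f hf => hεV <| by
      have := hu (((ε⁻¹ : ℝ) : ℂ) • f) fun i => by
        rw [map_smul_eq_mul, Complex.norm_real, Real.norm_of_nonneg (by positivity)]
        exact mul_le_mul_of_nonneg_left (hr i f hf).le (by positivity)
      rw [map_smul, norm_smul, Complex.norm_real, Real.norm_of_nonneg (by positivity),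
        inv_mul_le_one₀ hε] at this
      simpa using this
    simpa using this
  -- Compactness upgrades agreement on finite sets of distributions to agreement everywhere.
  obtain ⟨f, -, hf⟩ := (isCompact_schwartzBox c).inter_iInter_nonempty
    (fun u : 𝓢(E, ℂ) →L[ℂ] ℂ => {f | u f = φ u})
    (fun u => isClosed_eq u.continuous continuous_const) fun s => by
      obtain ⟨f, hf, hfs⟩ := exists_mem_schwartzBox_forall_finset
        (fun i => mul_nonneg (inv_nonneg.2 hε.le) (hr0 i).le) φ.toLinearMap hφ s
      exact ⟨f, hf, by simpa using hfs⟩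
  exact ⟨f, by simpa using hf⟩

/-- Every strongly continuous operator on tempered distributions is the transpose of a continuous
operator on Schwartz space. Continuity holds because the transpose preserves bounded sets and Schwartz
space is first countable. -/
theorem exists_transpose (B : (𝓢(E, ℂ) →L[ℂ] ℂ) →L[ℂ] (𝓢(E, ℂ) →L[ℂ] ℂ)) :
    ∃ T : 𝓢(E, ℂ) →L[ℂ] 𝓢(E, ℂ), ∀ u g, u (T g) = B u g := by
  have h : ∀ g : 𝓢(E, ℂ), ∃ f : 𝓢(E, ℂ), ∀ u : 𝓢(E, ℂ) →L[ℂ] ℂ, u f = B u g := fun g =>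
    schwartz_semireflexive
      { toFun := fun u => B u g
        map_add' := by simp
        map_smul' := by simp
        cont := (continuous_eval_const g).comp B.continuous }
  choose T hT using h
  let T' : 𝓢(E, ℂ) →ₗ[ℂ] 𝓢(E, ℂ) :=
    { toFun := T
      map_add' := fun g₁ g₂ => schwartz_ext_of_dual fun u => by simp [hT]
      map_smul' := fun a g => schwartz_ext_of_dual fun u => by simp [hT] }
  refine ⟨⟨T', T'.continuous_of_locally_bounded fun s hs => ?_⟩, fun u g => hT g u⟩
  rw [(schwartz_withSeminorms ℂ E ℂ).image_isVonNBounded_iff_seminorm_bounded]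
  intro i
  have hbdd := ContinuousLinearMap.isVonNBounded_image2_apply
    ((isVonNBounded_schwartzPolar (E := E) i).image B) hs
  rw [NormedSpace.isVonNBounded_iff, isBounded_iff_forall_norm_le] at hbdd
  obtain ⟨r, hr⟩ := hbdd
  refine ⟨max r 0 + 1, by positivity, fun g hg => lt_of_le_of_lt
    (seminorm_le_of_schwartzPolar i _ (le_max_right r 0) fun u hu => ?_) (lt_add_one _)⟩
  change ‖u (T g)‖ ≤ _
  rw [hT]
  exact (hr _ ⟨B u, ⟨u, hu, rfl⟩, g, hg, rfl⟩).trans (le_max_left _ _)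

end Duality

/-! ### Complex conjugation on Schwartz space -/

section Conjugation

variable {E : Type*} [NormedAddCommGroup E] [NormedSpace ℝ E]

/-- Complex conjugation of Schwartz functions, as a real-linear operator. -/
noncomputable def schwartzConj : 𝓢(E, ℂ) →L[ℝ] 𝓢(E, ℂ) :=
  SchwartzMap.postcompCLM (Complex.conjCLE : ℂ →L[ℝ] ℂ)

lemma schwartzConj_apply (f : 𝓢(E, ℂ)) (x : E) :
    schwartzConj f x = (starRingEnd ℂ) (f x) := rfl

lemma schwartzConj_conj (f : 𝓢(E, ℂ)) : schwartzConj (schwartzConj f) = f := by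
  ext x
  simp [schwartzConj_apply]

lemma schwartzConj_smul (a : ℂ) (f : 𝓢(E, ℂ)) :
    schwartzConj (a • f) = (starRingEnd ℂ) a • schwartzConj f := by
  ext x
  simp [schwartzConj_apply]

lemma seminorm_schwartzConj_le (i : ℕ × ℕ) (f : 𝓢(E, ℂ)) :
    schwartzSeminormFamily ℂ E ℂ i (schwartzConj f) ≤ schwartzSeminormFamily ℂ E ℂ i f := by
  refine SchwartzMap.seminorm_le_bound ℂ i.1 i.2 _ (apply_nonneg _ _) fun x => ?_
  have : ‖iteratedFDeriv ℝ i.2 (schwartzConj f) x‖ = ‖iteratedFDeriv ℝ i.2 f x‖ :=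
    Complex.conjLIE.norm_iteratedFDeriv_comp_left f x i.2
  rw [this]
  exact SchwartzMap.le_seminorm ℂ i.1 i.2 f x

lemma isVonNBounded_image_schwartzConj {s : Set 𝓢(E, ℂ)} (hs : IsVonNBounded ℂ s) :
    IsVonNBounded ℂ (schwartzConj '' s) := by
  rw [(schwartz_withSeminorms ℂ E ℂ).image_isVonNBounded_iff_seminorm_bounded]
  intro i
  obtain ⟨r, hr, h⟩ := (schwartz_withSeminorms ℂ E ℂ).isVonNBounded_iff_seminorm_bounded.1 hs i
  exact ⟨r, hr, fun f hf => (seminorm_schwartzConj_le i f).trans_lt (h f hf)⟩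

end Conjugation

/-! ### The adjoint -/

section Adjoint

variable {n : ℕ}

lemma isConjOf_iff {f g : 𝓢(Fin n → ℝ, ℂ)} : IsConjOf f g ↔ g = schwartzConj f :=
  ⟨fun h => SchwartzMap.ext h, fun h x => by rw [h, schwartzConj_apply]⟩

lemma isAdjointOfDistOp_iff {B : TemperedDist n →L[ℂ] TemperedDist n}
    {A : 𝓢(Fin n → ℝ, ℂ) →L[ℂ] 𝓢(Fin n → ℝ, ℂ)} :
    IsAdjointOfDistOp B A ↔ ∀ g u, u (schwartzConj (A g)) = B u (schwartzConj g) := by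
  simp only [IsAdjointOfDistOp, isConjOf_iff]
  exact ⟨fun h g u => h g _ _ rfl rfl u, by rintro h g _ _ rfl rfl u; exact h g u⟩

lemma exists_isAdjointOfDistOp (B : TemperedDist n →L[ℂ] TemperedDist n) :
    ∃ A : 𝓢(Fin n → ℝ, ℂ) →L[ℂ] 𝓢(Fin n → ℝ, ℂ), IsAdjointOfDistOp B A := by
  obtain ⟨T, hT⟩ := exists_transpose B
  refine ⟨{ toFun := fun g => schwartzConj (T (schwartzConj g))
            map_add' := by simp
            map_smul' := fun a g => by simp [schwartzConj_smul]
            cont := schwartzConj.continuous.comp (T.continuous.comp schwartzConj.continuous) }, ?_⟩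
  rw [isAdjointOfDistOp_iff]
  intro g u
  change u (schwartzConj (schwartzConj (T (schwartzConj g)))) = _
  rw [schwartzConj_conj, hT]

lemma IsAdjointOfDistOp.unique {B : TemperedDist n →L[ℂ] TemperedDist n}
    {A A' : 𝓢(Fin n → ℝ, ℂ) →L[ℂ] 𝓢(Fin n → ℝ, ℂ)} (h : IsAdjointOfDistOp B A)
    (h' : IsAdjointOfDistOp B A') : A = A' := by
  rw [isAdjointOfDistOp_iff] at h h'
  ext1 g
  have : schwartzConj (A g) = schwartzConj (A' g) :=
    schwartz_ext_of_dual fun u => (h g u).trans (h' g u).symm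
  rw [← schwartzConj_conj (A g), this, schwartzConj_conj]

lemma IsAdjointOfDistOp.add {B B' : TemperedDist n →L[ℂ] TemperedDist n}
    {A A' : 𝓢(Fin n → ℝ, ℂ) →L[ℂ] 𝓢(Fin n → ℝ, ℂ)} (h : IsAdjointOfDistOp B A)
    (h' : IsAdjointOfDistOp B' A') : IsAdjointOfDistOp (B + B') (A + A') := by
  rw [isAdjointOfDistOp_iff] at *
  intro g u
  simp [h, h']

/-- The `i`-th seminorm of `B* g`, for `g` in a bounded set `s`, is at most the supremum of
`‖B u (conj g)‖` over `u` in the polar of that seminorm. Since polars are bounded, this is small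
uniformly on `s` when `B` is close to `0`. -/
lemma tendsto_adjoint_zero
    {adj : (TemperedDist n →L[ℂ] TemperedDist n) → (𝓢(Fin n → ℝ, ℂ) →L[ℂ] 𝓢(Fin n → ℝ, ℂ))}
    (hadj : ∀ B, IsAdjointOfDistOp B (adj B)) : Tendsto adj (𝓝 0) (𝓝 0) := by
  rw [ContinuousLinearMap.hasBasis_nhds_zero.tendsto_right_iff]
  rintro ⟨s, U⟩ ⟨hs, hU⟩
  obtain ⟨I, r, hr, hIU⟩ := ((schwartz_withSeminorms ℂ _ ℂ).mem_nhds_iff _ _).1 hU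
  have key : ∀ i ∈ I, ∀ᶠ B in 𝓝 (0 : TemperedDist n →L[ℂ] TemperedDist n),
      ∀ g ∈ s, schwartzSeminormFamily ℂ _ ℂ i (adj B g) < r := by
    intro i _
    have hV := ContinuousLinearMap.eventually_nhds_zero_mapsTo (σ := RingHom.id ℂ) (F := ℂ)
      (isVonNBounded_image_schwartzConj hs) (Metric.closedBall_mem_nhds (0 : ℂ) (half_pos hr))
    filter_upwards [ContinuousLinearMap.eventually_nhds_zero_mapsTo (σ := RingHom.id ℂ)
      (isVonNBounded_schwartzPolar i) hV] with B hB g hg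
    refine lt_of_le_of_lt ?_ (half_lt_self hr)
    rw [← schwartzConj_conj (adj B g)]
    refine (seminorm_schwartzConj_le i _).trans
      (seminorm_le_of_schwartzPolar i _ (half_pos hr).le fun u hu => ?_)
    rw [isAdjointOfDistOp_iff.1 (hadj B)]
    exact mem_closedBall_zero_iff.1 (hB hu ⟨g, hg, rfl⟩)
  filter_upwards [(Filter.eventually_all_finset I).2 key] with B hB g hg
  refine hIU ?_
  rw [Seminorm.mem_ball_zero]
  exact Seminorm.finset_sup_apply_lt hr fun i hi => hB i hi g hg

set_option synthInstance.maxHeartbeats 200000 in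
lemma continuous_adjoint
    {adj : (TemperedDist n →L[ℂ] TemperedDist n) → (𝓢(Fin n → ℝ, ℂ) →L[ℂ] 𝓢(Fin n → ℝ, ℂ))}
    (hadj : ∀ B, IsAdjointOfDistOp B (adj B)) : Continuous adj := by
  let adjHom : (TemperedDist n →L[ℂ] TemperedDist n) →+
      (𝓢(Fin n → ℝ, ℂ) →L[ℂ] 𝓢(Fin n → ℝ, ℂ)) :=
    AddMonoidHom.mk' adj fun B B' => (hadj (B + B')).unique ((hadj B).add (hadj B'))
  have h : ContinuousAt adjHom 0 := by
    rw [ContinuousAt, map_zero]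
    exact tendsto_adjoint_zero hadj
  exact continuous_of_continuousAt_zero adjHom h

end Adjoint

/-- Every continuous linear map `B : 𝓢'(ℝ^k) → 𝓢'(ℝ^k)` (strong topologies) has a unique
adjoint `B* : 𝓢(ℝ^k) → 𝓢(ℝ^k)` satisfying `u (conj (B* g)) = (B u)(conj g)` for all `g, u`;
moreover `B ↦ B*` is continuous from `L(𝓢'(ℝ^k), 𝓢'(ℝ^k))` to `L(𝓢(ℝ^k), 𝓢(ℝ^k))`, both
spaces carrying the topology of uniform convergence on bounded sets. -/
theorem adjoint_of_distOp_exists_unique_continuous (k : ℕ) :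
    (∀ B : TemperedDist k →L[ℂ] TemperedDist k,
      ∃! Bstar : SchwartzMap (Fin k → ℝ) ℂ →L[ℂ] SchwartzMap (Fin k → ℝ) ℂ,
        IsAdjointOfDistOp B Bstar) ∧
    (∃ adj : (TemperedDist k →L[ℂ] TemperedDist k) →
        (SchwartzMap (Fin k → ℝ) ℂ →L[ℂ] SchwartzMap (Fin k → ℝ) ℂ),
      Continuous adj ∧ ∀ B, IsAdjointOfDistOp B (adj B)) := by
  refine ⟨fun B => ?_, ?_⟩
  · obtain ⟨A, hA⟩ := exists_isAdjointOfDistOp B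
    exact ⟨A, hA, fun A' hA' => hA'.unique hA⟩
  · choose adj hadj using exists_isAdjointOfDistOp (n := k)
    exact ⟨adj, continuous_adjoint hadj, hadj⟩
end

section
/- Let k ∈ ℕ and let A : 𝓢(ℝ^k) → 𝓢'(ℝ^k) be a continuous linear map with the good mapping property: for each α ∈ {1,…,k} there exists a continuous bilinear map Φ_α : 𝓢(ℝ^k) × 𝓢(ℝ^k) → 𝓢(ℝ²) such that for all f, g ∈ 𝓢(ℝ^k), all φ ∈ 𝓢(ℝ), and all x' ∈ ℝ, (A f)(h_{φ,g,x',α}) = ∫_ℝ Φ_α(f,g)(x,x') φ(x) dx, where h_{φ,g,x',α}(y₁,…,y_k) := φ(y_α)·g(y₁,…,y_{α−1}, x', y_{α+1},…,y_k). Then the bosonic symmetrization Sym_k(A) := (1/k!)·Σ_{π∈S_k} π ∘ A ∘ π⁻¹, restricted to bosonic arguments, also has the good mapping property: for each α ∈ {1,…,k} there exists a continuous bilinear map Φ : 𝓢_s(ℝ^k) × 𝓢_s(ℝ^k) → 𝓢(ℝ²) such that for all bosonic f, g ∈ 𝓢_s(ℝ^k), all φ ∈ 𝓢(ℝ), and all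 x' ∈ ℝ, (Sym_k(A) f)(h_{φ,g,x',α}) = ∫_ℝ Φ(f,g)(x,x') φ(x) dx. -/
/-!
On bosonic arguments `f` and `g`, each summand of `Sym_k(A)` is again governed by one of the given
kernels. The permutation fixes `f`, and it turns the test function `h_{φ,g,x',α}` into
`h_{φ,g,x',π⁻¹α}` (`update_comp_perm` together with the invariance of `g`). Hence
`(π A π⁻¹ f)(h_{φ,g,x',α}) = ∫ Φ_{π⁻¹α}(f,g)(x,x') φ(x) dx`, and averaging over `π` shows that
`Ψ(f,g) = (1/k!) Σ_π Φ_{π⁻¹α}(f,g)` is a witness for `Sym_k(A)`. Exchanging the finite sum and the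
integral needs only that a bounded continuous function times a Schwartz function is integrable
(`integrable_slice_mul`).
-/

open MeasureTheory SchwartzMap

/-- The continuous linear equivalence on `ℝ^k` permuting coordinates: `x ↦ x ∘ π`. -/
noncomputable def permCLE (k : ℕ) (π : Equiv.Perm (Fin k)) : (Fin k → ℝ) ≃L[ℝ] (Fin k → ℝ) :=
  (LinearEquiv.funCongrLeft ℝ ℝ π).toContinuousLinearEquiv

/-- The action of a permutation `π` on Schwartz functions on `ℝ^k`. -/
noncomputable def permCLM (k : ℕ) (π : Equiv.Perm (Fin k)) :
    SchwartzMap (Fin k → ℝ) ℂ →L[ℂ] SchwartzMap (Fin k → ℝ) ℂ :=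
  SchwartzMap.compCLMOfContinuousLinearEquiv ℂ (permCLE k π)

/-- A Schwartz function is bosonic (symmetric) if it is invariant under all permutations of its
arguments. -/
def IsBosonic {k : ℕ} (f : SchwartzMap (Fin k → ℝ) ℂ) : Prop :=
  ∀ (π : Equiv.Perm (Fin k)) (x : Fin k → ℝ), f (x ∘ π) = f x

/-- The bosonic (symmetric) Schwartz space `𝓢_s(ℝ^k)` as a submodule of `𝓢(ℝ^k)` (carrying the
subspace topology). -/
noncomputable def bosonic (k : ℕ) : Submodule ℂ (SchwartzMap (Fin k → ℝ) ℂ) where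
  carrier := {f | IsBosonic f}
  add_mem' := fun hf hg π x => by simp only [SchwartzMap.add_apply, hf π x, hg π x]
  zero_mem' := fun π x => rfl
  smul_mem' := fun c f hf π x => by simp only [SchwartzMap.smul_apply, hf π x]

/-- The bosonic symmetrization `Sym_k(A) = (1/k!)·Σ_{π∈S_k} π ∘ A ∘ π⁻¹`, evaluated at `f`. -/
noncomputable def symDVOApply (k : ℕ) (A : DVO k) (f : SchwartzMap (Fin k → ℝ) ℂ) :
    SchwartzMap (Fin k → ℝ) ℂ →L[ℂ] ℂ :=
  (Nat.factorial k : ℂ)⁻¹ •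
    ∑ π : Equiv.Perm (Fin k), (A (permCLM k π⁻¹ f)).comp (permCLM k π⁻¹)

/-- `Φ` witnesses the good mapping property of `A` in the coordinate `α`:
`(A f)(h_{φ,g,x',α}) = ∫ Φ(f,g)(x,x')·φ(x) dx` for all `f, g, φ, x'`, where
`h_{φ,g,x',α}(y₁,…,y_k) = φ(y_α)·g(y₁,…,y_{α−1},x',y_{α+1},…,y_k)`. -/
def IsGMPWitness (k : ℕ) (A : DVO k) (α : Fin k)
    (Φ : SchwartzMap (Fin k → ℝ) ℂ × SchwartzMap (Fin k → ℝ) ℂ → SchwartzMap (ℝ × ℝ) ℂ) : Prop :=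
  ∀ (f g : SchwartzMap (Fin k → ℝ) ℂ) (φ : SchwartzMap ℝ ℂ) (x' : ℝ)
    (h : SchwartzMap (Fin k → ℝ) ℂ),
    (∀ y : Fin k → ℝ, h y = φ (y α) * g (Function.update y α x')) →
    A f h = ∫ x : ℝ, Φ (f, g) (x, x') * φ x

theorem permCLM_apply (k : ℕ) (π : Equiv.Perm (Fin k)) (f : SchwartzMap (Fin k → ℝ) ℂ)
    (y : Fin k → ℝ) : permCLM k π f y = f (y ∘ π) := rfl

theorem permCLM_of_isBosonic {k : ℕ} (π : Equiv.Perm (Fin k)) {f : SchwartzMap (Fin k → ℝ) ℂ}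
    (hf : IsBosonic f) : permCLM k π f = f := by
  ext y
  exact hf π y

theorem update_comp_perm {k : ℕ} (σ : Equiv.Perm (Fin k)) (y : Fin k → ℝ) (α : Fin k) (t : ℝ) :
    Function.update (y ∘ σ) α t = Function.update y (σ α) t ∘ σ := by
  rw [Function.update_comp_eq_of_injective y σ.injective]

theorem integrable_slice_mul (F : SchwartzMap (ℝ × ℝ) ℂ) (φ : SchwartzMap ℝ ℂ) (t : ℝ) :
    Integrable (fun x : ℝ => F (x, t) * φ x) := by
  obtain ⟨C, hC⟩ := F.decay 0 0
  refine φ.integrable.bdd_mul (c := C) ?_ ?_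
  · exact (F.continuous.comp (by fun_prop)).aestronglyMeasurable
  · refine Filter.Eventually.of_forall fun x => ?_
    simpa using hC.2 (x, t)

/-- If `A : 𝓢(ℝ^k) → 𝓢'(ℝ^k)` has the good mapping property (witnessed, in each coordinate `α`,
by a continuous bilinear `Φ_α : 𝓢(ℝ^k) × 𝓢(ℝ^k) → 𝓢(ℝ²)`), then so does its bosonic
symmetrization `Sym_k(A)` restricted to bosonic arguments: in each coordinate `α` there is a
continuous bilinear `Ψ : 𝓢_s(ℝ^k) × 𝓢_s(ℝ^k) → 𝓢(ℝ²)` with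
`(Sym_k(A) f)(h_{φ,g,x',α}) = ∫ Ψ(f,g)(x,x')·φ(x) dx` for all bosonic `f, g`. -/
theorem sym_preserves_good_mapping_property (k : ℕ) (A : DVO k)
    (hA : ∀ α : Fin k,
      ∃ Φ : SchwartzMap (Fin k → ℝ) ℂ × SchwartzMap (Fin k → ℝ) ℂ → SchwartzMap (ℝ × ℝ) ℂ,
        Continuous Φ ∧
        (∀ f f' g, Φ (f + f', g) = Φ (f, g) + Φ (f', g)) ∧
        (∀ (c : ℂ) f g, Φ (c • f, g) = c • Φ (f, g)) ∧
        (∀ f g g', Φ (f, g + g') = Φ (f, g) + Φ (f, g')) ∧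
        (∀ (c : ℂ) f g, Φ (f, c • g) = c • Φ (f, g)) ∧
        IsGMPWitness k A α Φ) :
    ∀ α : Fin k,
      ∃ Ψ : ↥(bosonic k) × ↥(bosonic k) → SchwartzMap (ℝ × ℝ) ℂ,
        Continuous Ψ ∧
        (∀ f f' g, Ψ (f + f', g) = Ψ (f, g) + Ψ (f', g)) ∧
        (∀ (c : ℂ) f g, Ψ (c • f, g) = c • Ψ (f, g)) ∧
        (∀ f g g', Ψ (f, g + g') = Ψ (f, g) + Ψ (f, g')) ∧
        (∀ (c : ℂ) f g, Ψ (f, c • g) = c • Ψ (f, g)) ∧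
        (∀ (f g : ↥(bosonic k)) (φ : SchwartzMap ℝ ℂ) (x' : ℝ)
          (h : SchwartzMap (Fin k → ℝ) ℂ),
          (∀ y : Fin k → ℝ,
            h y = φ (y α) * (g : SchwartzMap (Fin k → ℝ) ℂ) (Function.update y α x')) →
          symDVOApply k A (f : SchwartzMap (Fin k → ℝ) ℂ) h
            = ∫ x : ℝ, Ψ (f, g) (x, x') * φ x) := by
  classical
  choose Φ hcont hadd hsmul hadd' hsmul' hΦ using hA
  intro α
  refine ⟨fun p => (Nat.factorial k : ℂ)⁻¹ • ∑ π : Equiv.Perm (Fin k),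
    Φ (π⁻¹ α) ((p.1 : SchwartzMap (Fin k → ℝ) ℂ), (p.2 : SchwartzMap (Fin k → ℝ) ℂ)),
    ?_, ?_, ?_, ?_, ?_, ?_⟩
  · have hpair : Continuous fun p : ↥(bosonic k) × ↥(bosonic k) =>
        ((p.1 : SchwartzMap (Fin k → ℝ) ℂ), (p.2 : SchwartzMap (Fin k → ℝ) ℂ)) := by
      fun_prop
    exact (continuous_finsetSum _ fun (π : Equiv.Perm (Fin k)) _ =>
      (hcont (π⁻¹ α)).comp hpair).const_smul
      (Nat.factorial k : ℂ)⁻¹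
  · intro f f' g
    simp only [Submodule.coe_add, hadd, Finset.sum_add_distrib, smul_add]
  · intro c f g
    simp only [Submodule.coe_smul, hsmul, ← Finset.smul_sum]
    rw [smul_comm]
  · intro f g g'
    simp only [Submodule.coe_add, hadd', Finset.sum_add_distrib, smul_add]
  · intro c f g
    simp only [Submodule.coe_smul, hsmul', ← Finset.smul_sum]
    rw [smul_comm]
  · intro f g φ x' h hh
    have key : ∀ π : Equiv.Perm (Fin k),
        A (permCLM k π⁻¹ (f : SchwartzMap (Fin k → ℝ) ℂ)) (permCLM k π⁻¹ h)
          = ∫ x : ℝ, Φ (π⁻¹ α) ((f : SchwartzMap (Fin k → ℝ) ℂ),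
              (g : SchwartzMap (Fin k → ℝ) ℂ)) (x, x') * φ x := by
      intro π
      rw [permCLM_of_isBosonic _ f.2]
      refine hΦ (π⁻¹ α) _ _ φ x' _ fun y => ?_
      rw [permCLM_apply, hh, update_comp_perm, g.2 π⁻¹]
      rfl
    simp only [symDVOApply, smul_apply, sum_apply, ContinuousLinearMap.comp_apply, key,
      smul_eq_mul, mul_assoc, Finset.sum_mul]
    rw [integral_const_mul, integral_finsetSum _ fun π _ => integrable_slice_mul _ φ x']
end
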